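/- arXiv:1007.0564 — 2 statements merged into one kernel-verified Lean document; each statement's English description precedes it below -/
import Mathlib

section
/- Let T ∈ S′(ℝ^d) be a tempered distribution, x ∈ ℝ^d, and φ in the Schwartz space S(ℝ^d). Then the family (T(h_γ) · ∫_{ℝ^d} h_γ(y) φ(y+x) dy)_{γ∈ℕ^d} is absolutely summable, and Σ_{γ∈ℕ^d} T(h_γ) ∫_{ℝ^d} h_γ(y) φ(y+x) dy = T(τ_{−x} φ), where τ_{−x} φ(y) = φ(y+x). (This expresses that the Hermite regularization of T commutes with translation up to association.) -/
open MeasureTheory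

noncomputable def hermitePoly (n : ℕ) (x : ℝ) : ℝ :=
  (-1 : ℝ) ^ n * Real.exp (x ^ 2 / 2) *
    iteratedDeriv n (fun y : ℝ => Real.exp (-(y ^ 2 / 2))) x

noncomputable def hermiteFun (n : ℕ) (x : ℝ) : ℝ :=
  (Real.sqrt (Real.sqrt (2 * Real.pi) * n.factorial))⁻¹ *
    Real.exp (-(x ^ 2 / 4)) * hermitePoly n x

noncomputable def hermiteFunMulti (d : ℕ) (α : Fin d → ℕ) (x : EuclideanSpace ℝ (Fin d)) : ℝ :=
  ∏ i, hermiteFun (α i) (x i)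

/-!
For the annihilation and creation operators `x_i / 2 + ∂_i` and `x_i / 2 - ∂_i`, adjoint to each
other in `L²`, one has `a_i h_γ = √γ_i h_{γ - e_i}` and `a_i† h_γ = √(γ_i + 1) h_{γ + e_i}`.
Since position and derivative are combinations of `a_i` and `a_i†`, every Schwartz seminorm of `h_γ`
grows polynomially in `γ`. Since `⟨h_γ, a_i a_i† f⟩ = (γ_i + 1) ⟨h_γ, f⟩`, the coefficients of a
Schwartz function decay faster than any power, so `∑ ⟨h_γ, f⟩ h_γ` converges in the Schwartz space.
Its sum is `f`: the functions orthogonal to all `h_γ` are stable under multiplication by linear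
forms, so every moment of `exp (-‖x‖² / 4) f` vanishes for such an `f`, whence its Fourier transform
is zero. Applying `T` to the expansion of the translate of `φ` gives the theorem.
-/

open Filter Topology Asymptotics
open scoped SchwartzMap LineDeriv FourierTransform

section SchwartzSeries

variable {ι E F : Type*} [NormedAddCommGroup E] [NormedSpace ℝ E] [NormedAddCommGroup F]
  [NormedSpace ℝ F] [CompleteSpace F] {u : ι → 𝓢(E, F)}

theorem contDiff_tsum_schwartz (hu : ∀ k l, Summable fun i => SchwartzMap.seminorm ℝ k l (u i)) :
    ContDiff ℝ (⊤ : ℕ∞) fun y => ∑' i, u i y :=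
  contDiff_tsum (fun i => (u i).smooth ⊤) (fun l _ => hu 0 l)
    fun l i x _ => (u i).norm_iteratedFDeriv_le_seminorm ℝ l x

theorem iteratedFDeriv_tsum_schwartz
    (hu : ∀ k l, Summable fun i => SchwartzMap.seminorm ℝ k l (u i)) (l : ℕ) (x : E) :
    iteratedFDeriv ℝ l (fun y => ∑' i, u i y) x = ∑' i, iteratedFDeriv ℝ l (u i) x :=
  iteratedFDeriv_tsum_apply (N := (⊤ : ℕ∞)) (fun i => (u i).smooth ⊤) (fun l _ => hu 0 l)
    (fun l i x _ => (u i).norm_iteratedFDeriv_le_seminorm ℝ l x) le_top x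

theorem pow_norm_mul_norm_iteratedFDeriv_tsum_schwartz_le
    (hu : ∀ k l, Summable fun i => SchwartzMap.seminorm ℝ k l (u i)) (k l : ℕ) (x : E) :
    ‖x‖ ^ k * ‖iteratedFDeriv ℝ l (fun y => ∑' i, u i y) x‖ ≤
      ∑' i, SchwartzMap.seminorm ℝ k l (u i) := by
  have norm_pow_smul (v : E [×l]→L[ℝ] F) : ‖‖x‖ ^ k • v‖ = ‖x‖ ^ k * ‖v‖ := by
    rw [norm_smul, norm_pow, norm_norm]
  rw [iteratedFDeriv_tsum_schwartz hu, ← norm_pow_smul, ← tsum_const_smul'']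
  refine tsum_of_norm_bounded (hu k l).hasSum fun i => ?_
  rw [norm_pow_smul]
  exact SchwartzMap.le_seminorm ℝ k l (u i) x

/-- The pointwise sum of a family of Schwartz functions that is absolutely summable for each
Schwartz seminorm, as a Schwartz function. -/
noncomputable def schwartzTsum (u : ι → 𝓢(E, F))
    (hu : ∀ k l, Summable fun i => SchwartzMap.seminorm ℝ k l (u i)) : 𝓢(E, F) where
  toFun y := ∑' i, u i y
  smooth' := contDiff_tsum_schwartz hu
  decay' k l := ⟨_, pow_norm_mul_norm_iteratedFDeriv_tsum_schwartz_le hu k l⟩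

theorem schwartzTsum_apply (hu : ∀ k l, Summable fun i => SchwartzMap.seminorm ℝ k l (u i))
    (x : E) : schwartzTsum u hu x = ∑' i, u i x :=
  rfl

theorem seminorm_schwartzTsum_le (hu : ∀ k l, Summable fun i => SchwartzMap.seminorm ℝ k l (u i))
    (k l : ℕ) :
    SchwartzMap.seminorm ℝ k l (schwartzTsum u hu) ≤ ∑' i, SchwartzMap.seminorm ℝ k l (u i) :=
  SchwartzMap.seminorm_le_bound ℝ k l _ (tsum_nonneg fun _ => apply_nonneg _ _)
    (pow_norm_mul_norm_iteratedFDeriv_tsum_schwartz_le hu k l)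

theorem summable_schwartz_apply
    (hu : ∀ k l, Summable fun i => SchwartzMap.seminorm ℝ k l (u i)) (x : E) :
    Summable fun i => u i x :=
  .of_norm_bounded (hu 0 0) fun i => (u i).norm_le_seminorm ℝ x

theorem schwartzTsum_sub_sum (hu : ∀ k l, Summable fun i => SchwartzMap.seminorm ℝ k l (u i))
    (s : Finset ι) :
    schwartzTsum u hu - ∑ i ∈ s, u i =
      schwartzTsum (fun i : {i // i ∉ s} => u i) fun k l => (hu k l).subtype {i | i ∉ s} := by
  ext x
  rw [_root_.sub_apply, _root_.sum_apply, schwartzTsum_apply, schwartzTsum_apply,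
    ← (summable_schwartz_apply hu x).sum_add_tsum_subtype_compl s, add_sub_cancel_left]

theorem hasSum_schwartzTsum (hu : ∀ k l, Summable fun i => SchwartzMap.seminorm ℝ k l (u i)) :
    HasSum u (schwartzTsum u hu) := by
  refine ((schwartz_withSeminorms ℝ E F).tendsto_nhds _ _).2 fun ⟨k, l⟩ ε hε => ?_
  filter_upwards [(tendsto_tsum_compl_atTop_zero fun i =>
    SchwartzMap.seminorm ℝ k l (u i)).eventually_lt_const hε] with s hs
  rw [map_sub_rev, SchwartzMap.schwartzSeminormFamily_apply, schwartzTsum_sub_sum]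
  exact (seminorm_schwartzTsum_le _ k l).trans_lt hs

end SchwartzSeries

section SeminormBounds

variable {E F G : Type*} [NormedAddCommGroup E] [NormedSpace ℝ E]
  [NormedAddCommGroup F] [NormedSpace ℝ F] [NormedAddCommGroup G] [NormedSpace ℝ G]

theorem seminorm_succ_le_seminorm_fderivCLM (k l : ℕ) (f : 𝓢(E, F)) :
    SchwartzMap.seminorm ℝ k (l + 1) f ≤
      SchwartzMap.seminorm ℝ k l (SchwartzMap.fderivCLM ℝ E F f) := by
  refine SchwartzMap.seminorm_le_bound ℝ k (l + 1) f (apply_nonneg _ _) fun x => ?_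
  rw [← norm_iteratedFDeriv_fderiv]
  exact SchwartzMap.le_seminorm ℝ k l (SchwartzMap.fderivCLM ℝ E F f) x

theorem seminorm_postcompCLM_le (k l : ℕ) (L : F →L[ℝ] G) (f : 𝓢(E, F)) :
    SchwartzMap.seminorm ℝ k l (f.postcompCLM L) ≤ ‖L‖ * SchwartzMap.seminorm ℝ k l f := by
  refine SchwartzMap.seminorm_le_bound ℝ k l _ (by positivity) fun x => ?_
  calc ‖x‖ ^ k * ‖iteratedFDeriv ℝ l (f.postcompCLM L) x‖
      ≤ ‖x‖ ^ k * (‖L‖ * ‖iteratedFDeriv ℝ l f x‖) := by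
        gcongr
        exact L.norm_iteratedFDeriv_comp_left (f.contDiffAt ⊤) (mod_cast le_top)
    _ = ‖L‖ * (‖x‖ ^ k * ‖iteratedFDeriv ℝ l f x‖) := mul_left_comm _ _ _
    _ ≤ ‖L‖ * SchwartzMap.seminorm ℝ k l f := by
        gcongr
        exact SchwartzMap.le_seminorm ℝ k l f x

end SeminormBounds

section Position

variable {ι E F : Type*} [Fintype ι] [NormedAddCommGroup E] [InnerProductSpace ℝ E]
  [NormedAddCommGroup F] [NormedSpace ℝ F]

theorem norm_le_sum_abs_inner (b : OrthonormalBasis ι ℝ E) (x : E) :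
    ‖x‖ ≤ ∑ i, |inner ℝ (b i) x| := by
  calc ‖x‖ = ‖∑ i, inner ℝ (b i) x • b i‖ := by rw [b.sum_repr']
    _ ≤ ∑ i, ‖inner ℝ (b i) x • b i‖ := norm_sum_le _ _
    _ = ∑ i, |inner ℝ (b i) x| := by simp only [norm_smul, Real.norm_eq_abs, b.norm_eq_one, mul_one]

theorem fderivCLM_eq_sum_lineDerivOp (b : OrthonormalBasis ι ℝ E) (f : 𝓢(E, F)) :
    SchwartzMap.fderivCLM ℝ E F f =
      ∑ i, (∂_{b i} f).postcompCLM
        (ContinuousLinearMap.smulRightL ℝ E F (innerSL ℝ (b i))) := by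
  ext x v
  simp only [SchwartzMap.fderivCLM_apply, _root_.sum_apply, SchwartzMap.postcompCLM_apply,
    ContinuousLinearMap.smulRightL_apply_apply, SchwartzMap.lineDerivOp_apply_eq_fderiv,
    ContinuousLinearMap.smulRight_apply, innerSL_apply_apply, ← map_smul, ← map_sum, b.sum_repr']

theorem seminorm_succ_le_sum_lineDerivOp (b : OrthonormalBasis ι ℝ E) (k l : ℕ) (f : 𝓢(E, F)) :
    SchwartzMap.seminorm ℝ k (l + 1) f ≤ ∑ i, SchwartzMap.seminorm ℝ k l (∂_{b i} f) := by
  have norm_coord_le (i : ι) :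
      ‖ContinuousLinearMap.smulRightL ℝ E F (innerSL ℝ (b i))‖ ≤ 1 :=
    ContinuousLinearMap.opNorm_le_bound _ zero_le_one fun y => by
      simp [ContinuousLinearMap.norm_smulRight_apply]
  calc SchwartzMap.seminorm ℝ k (l + 1) f
      ≤ SchwartzMap.seminorm ℝ k l (SchwartzMap.fderivCLM ℝ E F f) :=
        seminorm_succ_le_seminorm_fderivCLM k l f
    _ ≤ ∑ i, SchwartzMap.seminorm ℝ k l ((∂_{b i} f).postcompCLM
          (ContinuousLinearMap.smulRightL ℝ E F (innerSL ℝ (b i)))) := by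
        rw [fderivCLM_eq_sum_lineDerivOp b]
        exact Finset.le_sum_of_subadditive _ (map_zero _).le (map_add_le_add _) _ _
    _ ≤ ∑ i, SchwartzMap.seminorm ℝ k l (∂_{b i} f) := by
        gcongr with i
        exact (seminorm_postcompCLM_le k l _ _).trans
          (mul_le_of_le_one_left (apply_nonneg _ _) (norm_coord_le i))

/-- The position operator in the direction `v`: multiplication by the linear form `⟪v, ·⟫`. -/
noncomputable def positionCLM (v : E) : 𝓢(E, F) →L[ℝ] 𝓢(E, F) :=
  SchwartzMap.smulLeftCLM F (inner ℝ v)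

theorem positionCLM_apply (v : E) (f : 𝓢(E, F)) (x : E) :
    positionCLM v f x = inner ℝ v x • f x :=
  SchwartzMap.smulLeftCLM_apply_apply (by fun_prop) f x

theorem positionCLM_eq_sum (b : OrthonormalBasis ι ℝ E) (v : E) (f : 𝓢(E, F)) :
    positionCLM v f = ∑ i, inner ℝ v (b i) • positionCLM (b i) f := by
  ext x
  simp only [positionCLM_apply, _root_.sum_apply, _root_.smul_apply, smul_smul,
    ← Finset.sum_smul, b.sum_inner_mul_inner]

theorem iterate_positionCLM_apply (v : E) (n : ℕ) (f : 𝓢(E, F)) (x : E) :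
    (positionCLM v)^[n] f x = inner ℝ v x ^ n • f x := by
  induction n with
  | zero => simp
  | succ n ih => rw [Function.iterate_succ_apply', positionCLM_apply, ih, smul_smul, pow_succ']

theorem seminorm_succ_zero_le_sum_positionCLM (b : OrthonormalBasis ι ℝ E) (k : ℕ)
    (f : 𝓢(E, F)) :
    SchwartzMap.seminorm ℝ (k + 1) 0 f ≤
      ∑ i, SchwartzMap.seminorm ℝ k 0 (positionCLM (b i) f) := by
  refine SchwartzMap.seminorm_le_bound ℝ (k + 1) 0 f
    (Finset.sum_nonneg fun _ _ => apply_nonneg _ _) fun x => ?_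
  calc ‖x‖ ^ (k + 1) * ‖iteratedFDeriv ℝ 0 f x‖
      = ‖x‖ ^ k * (‖x‖ * ‖f x‖) := by rw [norm_iteratedFDeriv_zero, pow_succ, mul_assoc]
    _ ≤ ‖x‖ ^ k * ((∑ i, |inner ℝ (b i) x|) * ‖f x‖) := by
        gcongr
        exact norm_le_sum_abs_inner b x
    _ = ∑ i, ‖x‖ ^ k * ‖positionCLM (b i) f x‖ := by
        simp only [Finset.sum_mul, Finset.mul_sum, positionCLM_apply, norm_smul, Real.norm_eq_abs]
    _ ≤ ∑ i, SchwartzMap.seminorm ℝ k 0 (positionCLM (b i) f) := by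
        gcongr with i
        exact SchwartzMap.norm_pow_mul_le_seminorm ℝ _ k x

/-- The annihilation operator `⟪v, ·⟫ / 2 + ∂_v`, normalized for the weight `exp (-‖x‖ ^ 2 / 4)`. -/
noncomputable def annihilationCLM (v : E) : 𝓢(E, F) →L[ℝ] 𝓢(E, F) :=
  (2⁻¹ : ℝ) • positionCLM v + LineDeriv.lineDerivOpCLM ℝ 𝓢(E, F) v

/-- The creation operator `⟪v, ·⟫ / 2 - ∂_v`, the formal adjoint of `annihilationCLM v`. -/
noncomputable def creationCLM (v : E) : 𝓢(E, F) →L[ℝ] 𝓢(E, F) :=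
  (2⁻¹ : ℝ) • positionCLM v - LineDeriv.lineDerivOpCLM ℝ 𝓢(E, F) v

theorem annihilationCLM_apply (v : E) (f : 𝓢(E, F)) :
    annihilationCLM v f = (2⁻¹ : ℝ) • positionCLM v f + ∂_{v} f :=
  rfl

theorem creationCLM_apply (v : E) (f : 𝓢(E, F)) :
    creationCLM v f = (2⁻¹ : ℝ) • positionCLM v f - ∂_{v} f :=
  rfl

theorem positionCLM_eq_annihilationCLM_add_creationCLM (v : E) (f : 𝓢(E, F)) :
    positionCLM v f = annihilationCLM v f + creationCLM v f := by
  rw [annihilationCLM_apply, creationCLM_apply]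
  module

theorem lineDerivOp_eq_half_smul_annihilationCLM_sub_creationCLM (v : E) (f : 𝓢(E, F)) :
    ∂_{v} f = (2⁻¹ : ℝ) • (annihilationCLM v f - creationCLM v f) := by
  rw [annihilationCLM_apply, creationCLM_apply]
  module

end Position

section Pairing

variable {E : Type*} [NormedAddCommGroup E] [InnerProductSpace ℝ E] [FiniteDimensional ℝ E]
  [MeasurableSpace E] [BorelSpace E]

/-- The `L²` pairing `f ↦ ∫ x, g x * f x` with a Schwartz function `g`. -/
noncomputable def schwartzPairing (g : 𝓢(E, ℝ)) : 𝓢(E, ℝ) →L[ℝ] ℝ :=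
  SchwartzMap.integralCLM ℝ volume ∘L SchwartzMap.pairing (ContinuousLinearMap.mul ℝ ℝ) g

theorem schwartzPairing_apply (g f : 𝓢(E, ℝ)) : schwartzPairing g f = ∫ x, g x * f x :=
  rfl

theorem abs_schwartzPairing_le (g f : 𝓢(E, ℝ)) :
    |schwartzPairing g f| ≤ SchwartzMap.seminorm ℝ 0 0 g * ∫ x, ‖f x‖ := by
  rw [schwartzPairing_apply, ← Real.norm_eq_abs, ← integral_const_mul]
  have integrable_norm_f : Integrable fun x => ‖f x‖ := f.integrable.norm
  refine norm_integral_le_of_norm_le (integrable_norm_f.const_mul _) (.of_forall fun x => ?_)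
  rw [norm_mul]
  gcongr
  exact g.norm_le_seminorm ℝ x

theorem schwartzPairing_sub_left (g₁ g₂ f : 𝓢(E, ℝ)) :
    schwartzPairing (g₁ - g₂) f = schwartzPairing g₁ f - schwartzPairing g₂ f := by
  simp only [schwartzPairing, map_sub, ContinuousLinearMap.comp_apply, _root_.sub_apply]

theorem schwartzPairing_smul_left (c : ℝ) (g f : 𝓢(E, ℝ)) :
    schwartzPairing (c • g) f = c * schwartzPairing g f := by
  simp only [schwartzPairing, map_smul, ContinuousLinearMap.comp_apply, _root_.smul_apply,
    smul_eq_mul]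

theorem schwartzPairing_comm (g f : 𝓢(E, ℝ)) : schwartzPairing g f = schwartzPairing f g := by
  simp only [schwartzPairing_apply, mul_comm]

theorem schwartzPairing_positionCLM (v : E) (g f : 𝓢(E, ℝ)) :
    schwartzPairing g (positionCLM v f) = schwartzPairing (positionCLM v g) f := by
  simp only [schwartzPairing_apply, positionCLM_apply, smul_eq_mul, mul_left_comm, mul_assoc]

theorem schwartzPairing_lineDerivOp (v : E) (g f : 𝓢(E, ℝ)) :
    schwartzPairing g (∂_{v} f) = -schwartzPairing (∂_{v} g) f :=
  SchwartzMap.integral_mul_lineDerivOp_right_eq_neg_left g f v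

theorem schwartzPairing_annihilationCLM (v : E) (g f : 𝓢(E, ℝ)) :
    schwartzPairing g (annihilationCLM v f) = schwartzPairing (creationCLM v g) f := by
  rw [annihilationCLM_apply, creationCLM_apply, map_add, map_smul, schwartzPairing_positionCLM,
    schwartzPairing_lineDerivOp, schwartzPairing_sub_left, schwartzPairing_smul_left, smul_eq_mul,
    sub_eq_add_neg]

theorem schwartzPairing_creationCLM (v : E) (g f : 𝓢(E, ℝ)) :
    schwartzPairing g (creationCLM v f) = schwartzPairing (annihilationCLM v g) f := by
  rw [schwartzPairing_comm, ← schwartzPairing_annihilationCLM, schwartzPairing_comm]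

end Pairing

section Moments

open scoped Nat

theorem exp_abs_inner_mul_exp_neg_le {E : Type*} [NormedAddCommGroup E] [InnerProductSpace ℝ E]
    (ξ x : E) :
    Real.exp |inner ℝ ξ x| * Real.exp (-(‖x‖ ^ 2 / 4)) ≤ Real.exp (‖ξ‖ ^ 2) := by
  rw [← Real.exp_add]
  gcongr
  nlinarith [abs_real_inner_le_norm ξ x, sq_nonneg (‖ξ‖ - ‖x‖ / 2)]

variable {E F : Type*} [NormedAddCommGroup E] [InnerProductSpace ℝ E] [MeasurableSpace E]
  [BorelSpace E] [NormedAddCommGroup F] [NormedSpace ℂ F]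

theorem hasSum_integral_pow_div_factorial_smul {α : Type*} [MeasurableSpace α] {μ : Measure α}
    {L : α → ℂ} {G : α → F} (hL : AEStronglyMeasurable L μ) (hG : AEStronglyMeasurable G μ)
    (hexp : Integrable (fun x => Real.exp ‖L x‖ * ‖G x‖) μ) :
    HasSum (fun n : ℕ => ∫ x, (L x ^ n / n !) • G x ∂μ) (∫ x, Complex.exp (L x) • G x ∂μ) := by
  have hasSum_bound (x : α) :
      HasSum (fun n : ℕ => ‖L x‖ ^ n / n ! * ‖G x‖) (Real.exp ‖L x‖ * ‖G x‖) := by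
    rw [Real.exp_eq_exp_ℝ]
    exact (NormedSpace.expSeries_div_hasSum_exp ‖L x‖).mul_right _
  refine hasSum_integral_of_dominated_convergence (fun n x => ‖L x‖ ^ n / n ! * ‖G x‖)
    (fun n => ((hL.pow n).mul_const _).smul hG) (fun n => .of_forall fun x => ?_)
    (.of_forall fun x => (hasSum_bound x).summable) ?_ (.of_forall fun x => ?_)
  · rw [norm_smul, norm_div, norm_pow, Complex.norm_natCast]
  · simpa only [(hasSum_bound _).tsum_eq] using hexp
  · rw [Complex.exp_eq_exp_ℂ]
    exact (NormedSpace.expSeries_div_hasSum_exp (L x)).smul_const _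

variable [FiniteDimensional ℝ E] {G : E → F}

theorem fourier_eq_zero_of_forall_integral_inner_pow_smul_eq_zero
    (hG : AEStronglyMeasurable G)
    (hexp : ∀ ξ : E, Integrable fun x => Real.exp |inner ℝ ξ x| * ‖G x‖)
    (hmoment : ∀ (ξ : E) (n : ℕ), ∫ x, inner ℝ ξ x ^ n • G x = 0) : 𝓕 G = 0 := by
  ext ξ
  let η : E := (-2 * Real.pi) • ξ
  have phase (x : E) : ((-2 * Real.pi * inner ℝ x ξ : ℝ) : ℂ) * Complex.I =
      (inner ℝ η x : ℝ) * Complex.I := by rw [real_inner_smul_left, real_inner_comm]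
  have series := hasSum_integral_pow_div_factorial_smul (G := G) (μ := volume)
    (L := fun x => (inner ℝ η x : ℝ) * Complex.I)
    (Continuous.aestronglyMeasurable (by fun_prop)) hG (by simpa using hexp η)
  have terms_zero (n : ℕ) :
      ∫ x, (((inner ℝ η x : ℝ) * Complex.I) ^ n / n ! : ℂ) • G x = 0 := by
    calc ∫ x, (((inner ℝ η x : ℝ) * Complex.I) ^ n / n ! : ℂ) • G x
        = ∫ x, (Complex.I ^ n / n !) • inner ℝ η x ^ n • G x := by
          congr with x
          rw [← Complex.coe_smul, smul_smul]
          push_cast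
          ring_nf
      _ = 0 := by rw [integral_smul, hmoment, smul_zero]
  simp only [terms_zero] at series
  rw [Real.fourier_eq', Pi.zero_apply]
  simpa only [phase] using series.unique hasSum_zero

theorem eq_zero_of_forall_integral_inner_pow_smul_eq_zero [CompleteSpace F]
    (hG : Continuous G) (hexp : ∀ ξ : E, Integrable fun x => Real.exp |inner ℝ ξ x| * ‖G x‖)
    (hmoment : ∀ (ξ : E) (n : ℕ), ∫ x, inner ℝ ξ x ^ n • G x = 0) : G = 0 := by
  have fourier_zero : 𝓕 G = 0 :=
    fourier_eq_zero_of_forall_integral_inner_pow_smul_eq_zero hG.aestronglyMeasurable hexp hmoment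
  have integrable_G : Integrable G := by
    refine (integrable_norm_iff hG.aestronglyMeasurable).1 ?_
    simpa using hexp 0
  rw [← hG.fourierInv_fourier_eq integrable_G (by rw [fourier_zero]; exact integrable_zero _ _ _),
    fourier_zero]
  ext x
  simp [Real.fourierInv_eq]

theorem eq_zero_of_forall_integral_inner_pow_mul_exp_neg_mul_eq_zero {f : E → ℝ}
    (hf : Continuous f) (hf_int : Integrable f)
    (hmoment : ∀ (ξ : E) (n : ℕ),
      ∫ x, inner ℝ ξ x ^ n * (Real.exp (-(‖x‖ ^ 2 / 4)) * f x) = 0) : f = 0 := by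
  let G (x : E) : ℂ := ((Real.exp (-(‖x‖ ^ 2 / 4)) * f x : ℝ) : ℂ)
  have continuous_G : Continuous G := by fun_prop
  have integrable_exp_mul (ξ : E) : Integrable fun x => Real.exp |inner ℝ ξ x| * ‖G x‖ := by
    refine (hf_int.norm.const_mul (Real.exp (‖ξ‖ ^ 2))).mono' (by fun_prop) (.of_forall fun x => ?_)
    rw [Real.norm_of_nonneg (by positivity), Complex.norm_real, norm_mul,
      Real.norm_of_nonneg (Real.exp_pos _).le, ← mul_assoc]
    gcongr
    exact exp_abs_inner_mul_exp_neg_le ξ x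
  have G_eq_zero : G = 0 :=
    eq_zero_of_forall_integral_inner_pow_smul_eq_zero continuous_G integrable_exp_mul fun ξ n => by
      simp only [G, Complex.real_smul, ← Complex.ofReal_mul]
      rw [integral_complex_ofReal, hmoment, Complex.ofReal_zero]
  ext x
  simpa [G, (Real.exp_pos _).ne'] using congr_fun G_eq_zero x

end Moments

section MultiIndexWeight

theorem summable_prod_apply {ι : Type*} [Fintype ι] {κ : ι → Type*} {f : ∀ i, κ i → ℝ}
    (hf₀ : ∀ i k, 0 ≤ f i k) (hf : ∀ i, Summable (f i)) :
    Summable fun γ : ∀ i, κ i => ∏ i, f i (γ i) := by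
  classical
  refine summable_of_sum_le (c := ∏ i, ∑' k, f i k)
    (fun γ => Finset.prod_nonneg fun i _ => hf₀ i (γ i)) fun s => ?_
  calc ∑ γ ∈ s, ∏ i, f i (γ i)
      ≤ ∑ γ ∈ Fintype.piFinset fun i => s.image (· i), ∏ i, f i (γ i) :=
        Finset.sum_le_sum_of_subset_of_nonneg
          (fun γ hγ => Fintype.mem_piFinset.2 fun i => Finset.mem_image_of_mem (· i) hγ)
          fun γ _ _ => Finset.prod_nonneg fun i _ => hf₀ i (γ i)
    _ = ∏ i, ∑ k ∈ s.image (· i), f i k := (Finset.prod_univ_sum _ _).symm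
    _ ≤ ∏ i, ∑' k, f i k :=
        Finset.prod_le_prod (fun i _ => Finset.sum_nonneg fun k _ => hf₀ i k)
          fun i _ => (hf i).sum_le_tsum _ fun k _ => hf₀ i k

variable {ι : Type*} [Fintype ι]

/-- The weight `∏ i, (γ i + 1)`, measuring the polynomial growth of families indexed by
multi-indices. -/
def multiIndexWeight (γ : ι → ℕ) : ℝ := ∏ i, ((γ i : ℝ) + 1)

theorem one_le_multiIndexWeight (γ : ι → ℕ) : 1 ≤ multiIndexWeight γ :=
  Finset.one_le_prod fun i _ => by simp

theorem multiIndexWeight_pos (γ : ι → ℕ) : 0 < multiIndexWeight γ :=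
  zero_lt_one.trans_le (one_le_multiIndexWeight γ)

theorem multiIndexWeight_mono : Monotone (multiIndexWeight : (ι → ℕ) → ℝ) := fun γ δ hγδ =>
  Finset.prod_le_prod (fun i _ => by positivity) fun i _ => by gcongr; exact hγδ i

theorem multiIndexWeight_add_le (γ δ : ι → ℕ) :
    multiIndexWeight (γ + δ) ≤ multiIndexWeight γ * multiIndexWeight δ := by
  rw [multiIndexWeight, multiIndexWeight, multiIndexWeight, ← Finset.prod_mul_distrib]
  refine Finset.prod_le_prod (fun i _ => by positivity) fun i _ => ?_
  rw [Pi.add_apply]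
  push_cast
  nlinarith [mul_nonneg (γ i).cast_nonneg (δ i).cast_nonneg (α := ℝ)]

theorem cast_add_one_le_multiIndexWeight (γ : ι → ℕ) (i : ι) :
    (γ i : ℝ) + 1 ≤ multiIndexWeight γ := by
  classical
  rw [multiIndexWeight, ← Finset.mul_prod_erase _ _ (Finset.mem_univ i)]
  exact le_mul_of_one_le_right (by positivity) (Finset.one_le_prod fun j _ => by simp)

theorem summable_multiIndexWeight_sq_inv :
    Summable fun γ : ι → ℕ => (multiIndexWeight γ ^ 2)⁻¹ := by
  have summable_sq_inv : Summable fun n : ℕ => (((n : ℝ) + 1) ^ 2)⁻¹ := by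
    simpa only [Nat.cast_succ] using
      (summable_nat_add_iff 1).2 (Real.summable_nat_pow_inv.2 one_lt_two)
  simpa only [multiIndexWeight, ← Finset.prod_pow, ← Finset.prod_inv_distrib] using
    summable_prod_apply (fun (_ : ι) _ => by positivity) fun _ => summable_sq_inv

theorem isBigO_multiIndexWeight_add (δ : ι → ℕ) :
    (fun γ : ι → ℕ => multiIndexWeight (γ + δ)) =O[⊤] (multiIndexWeight : (ι → ℕ) → ℝ) :=
  isBigO_top.2 ⟨multiIndexWeight δ, fun γ => by
    rw [Real.norm_of_nonneg (multiIndexWeight_pos _).le,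
      Real.norm_of_nonneg (multiIndexWeight_pos _).le, mul_comm]
    exact multiIndexWeight_add_le γ δ⟩

theorem isBigO_multiIndexWeight_sub (δ : ι → ℕ) :
    (fun γ : ι → ℕ => multiIndexWeight (γ - δ)) =O[⊤] (multiIndexWeight : (ι → ℕ) → ℝ) :=
  .of_norm_le fun γ => by
    rw [Real.norm_of_nonneg (multiIndexWeight_pos _).le]
    exact multiIndexWeight_mono tsub_le_self

theorem isBigO_sqrt_cast_add_one_multiIndexWeight (i : ι) :
    (fun γ : ι → ℕ => √(γ i + 1)) =O[⊤] (multiIndexWeight : (ι → ℕ) → ℝ) :=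
  .of_norm_le fun γ => by
    rw [Real.norm_of_nonneg (by positivity)]
    calc √((γ i : ℝ) + 1) ≤ γ i + 1 := Real.sqrt_le_self_iff.2 (.inr (by simp))
      _ ≤ multiIndexWeight γ := cast_add_one_le_multiIndexWeight γ i

theorem isBigO_sqrt_cast_multiIndexWeight (i : ι) :
    (fun γ : ι → ℕ => √(γ i)) =O[⊤] (multiIndexWeight : (ι → ℕ) → ℝ) := by
  have sqrt_le : (fun γ : ι → ℕ => √(γ i)) =O[⊤] fun γ : ι → ℕ => √((γ i : ℝ) + 1) :=
    .of_norm_le fun γ => by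
      rw [Real.norm_of_nonneg (by positivity)]
      gcongr
      linarith
  exact sqrt_le.trans (isBigO_sqrt_cast_add_one_multiIndexWeight i)

end MultiIndexWeight

section HermiteLadder

variable {ι E F : Type*} [Fintype ι] [DecidableEq ι] [NormedAddCommGroup E]
  [InnerProductSpace ℝ E] [NormedAddCommGroup F] [NormedSpace ℝ F]

/-- A family of Schwartz functions indexed by multi-indices on which the annihilation and creation
operators along an orthonormal basis act as on the Hermite functions. For `γ i = 0` the truncated
subtraction in the first rule is harmless, since the coefficient `√(γ i)` vanishes. -/
structure IsHermiteLadder (b : OrthonormalBasis ι ℝ E) (h : (ι → ℕ) → 𝓢(E, F)) : Prop where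
  annihilationCLM_eq : ∀ i γ, annihilationCLM (b i) (h γ) = √(γ i) • h (γ - Pi.single i 1)
  creationCLM_eq : ∀ i γ, creationCLM (b i) (h γ) = √(γ i + 1) • h (γ + Pi.single i 1)

namespace IsHermiteLadder

section Growth

variable {b : OrthonormalBasis ι ℝ E} {h : (ι → ℕ) → 𝓢(E, F)}

theorem isBigO_annihilationCLM (H : IsHermiteLadder b h) {p : Seminorm ℝ 𝓢(E, F)} {N : ℕ}
    (hp : (fun γ => p (h γ)) =O[⊤] fun γ => multiIndexWeight γ ^ N) (i : ι) :
    (fun γ => p (annihilationCLM (b i) (h γ))) =O[⊤] fun γ => multiIndexWeight γ ^ (N + 1) := by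
  simp only [H.annihilationCLM_eq, map_smul_eq_mul, pow_succ']
  exact (isBigO_sqrt_cast_multiIndexWeight i).norm_left.mul
    ((hp.comp_tendsto tendsto_top).trans ((isBigO_multiIndexWeight_sub _).pow N))

theorem isBigO_creationCLM (H : IsHermiteLadder b h) {p : Seminorm ℝ 𝓢(E, F)} {N : ℕ}
    (hp : (fun γ => p (h γ)) =O[⊤] fun γ => multiIndexWeight γ ^ N) (i : ι) :
    (fun γ => p (creationCLM (b i) (h γ))) =O[⊤] fun γ => multiIndexWeight γ ^ (N + 1) := by
  simp only [H.creationCLM_eq, map_smul_eq_mul, pow_succ']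
  exact (isBigO_sqrt_cast_add_one_multiIndexWeight i).norm_left.mul
    ((hp.comp_tendsto tendsto_top).trans ((isBigO_multiIndexWeight_add _).pow N))

theorem isBigO_positionCLM (H : IsHermiteLadder b h) {p : Seminorm ℝ 𝓢(E, F)} {N : ℕ}
    (hp : (fun γ => p (h γ)) =O[⊤] fun γ => multiIndexWeight γ ^ N) (i : ι) :
    (fun γ => p (positionCLM (b i) (h γ))) =O[⊤] fun γ => multiIndexWeight γ ^ (N + 1) := by
  refine .trans (.of_norm_le fun γ => ?_)
    ((H.isBigO_annihilationCLM hp i).add (H.isBigO_creationCLM hp i))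
  rw [Real.norm_of_nonneg (apply_nonneg _ _), positionCLM_eq_annihilationCLM_add_creationCLM]
  exact map_add_le_add p _ _

theorem isBigO_lineDerivOp (H : IsHermiteLadder b h) {p : Seminorm ℝ 𝓢(E, F)} {N : ℕ}
    (hp : (fun γ => p (h γ)) =O[⊤] fun γ => multiIndexWeight γ ^ N) (i : ι) :
    (fun γ => p (∂_{b i} (h γ))) =O[⊤] fun γ => multiIndexWeight γ ^ (N + 1) := by
  simp only [lineDerivOp_eq_half_smul_annihilationCLM_sub_creationCLM, map_smul_eq_mul]
  refine .const_mul_left (.trans (.of_norm_le fun γ => ?_)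
    ((H.isBigO_annihilationCLM hp i).add (H.isBigO_creationCLM hp i))) _
  rw [Real.norm_of_nonneg (apply_nonneg _ _)]
  exact map_sub_le_add p _ _

theorem isBigO_seminorm (H : IsHermiteLadder b h)
    (h_sup : (fun γ => SchwartzMap.seminorm ℝ 0 0 (h γ)) =O[⊤] multiIndexWeight) (k l : ℕ) :
    (fun γ => SchwartzMap.seminorm ℝ k l (h γ)) =O[⊤]
      fun γ => multiIndexWeight γ ^ (k + l + 1) := by
  induction l with
  | zero =>
    induction k with
    | zero => simpa using h_sup
    | succ k ih =>
      refine .trans (.of_norm_le fun γ => ?_)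
        (IsBigO.fun_sum fun i (_ : i ∈ Finset.univ) => H.isBigO_positionCLM ih i)
      rw [Real.norm_of_nonneg (apply_nonneg _ _)]
      exact seminorm_succ_zero_le_sum_positionCLM b k (h γ)
  | succ l ih =>
    refine .trans (.of_norm_le fun γ => ?_)
      (IsBigO.fun_sum fun i (_ : i ∈ Finset.univ) => H.isBigO_lineDerivOp ih i)
    rw [Real.norm_of_nonneg (apply_nonneg _ _)]
    exact seminorm_succ_le_sum_lineDerivOp b k l (h γ)

end Growth

section Coefficients

variable [FiniteDimensional ℝ E] [MeasurableSpace E] [BorelSpace E]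
  {b : OrthonormalBasis ι ℝ E} {h : (ι → ℕ) → 𝓢(E, ℝ)}

theorem schwartzPairing_annihilationCLM_creationCLM (H : IsHermiteLadder b h) (i : ι)
    (γ : ι → ℕ) (f : 𝓢(E, ℝ)) :
    schwartzPairing (h γ) (annihilationCLM (b i) (creationCLM (b i) f)) =
      (γ i + 1) * schwartzPairing (h γ) f := by
  rw [schwartzPairing_annihilationCLM, schwartzPairing_creationCLM, H.creationCLM_eq, map_smul,
    H.annihilationCLM_eq, smul_smul, schwartzPairing_smul_left, add_tsub_cancel_right,
    Pi.add_apply, Pi.single_eq_same, Nat.cast_succ, Real.mul_self_sqrt (by positivity)]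

theorem exists_schwartzPairing_eq_prod_mul (H : IsHermiteLadder b h) (s : Finset ι)
    (f : 𝓢(E, ℝ)) :
    ∃ g, ∀ γ, schwartzPairing (h γ) g = (∏ i ∈ s, ((γ i : ℝ) + 1)) * schwartzPairing (h γ) f := by
  induction s using Finset.induction_on with
  | empty => exact ⟨f, fun γ => by rw [Finset.prod_empty, one_mul]⟩
  | insert i s hi ih =>
    obtain ⟨g, hg⟩ := ih
    refine ⟨annihilationCLM (b i) (creationCLM (b i) g), fun γ => ?_⟩
    rw [H.schwartzPairing_annihilationCLM_creationCLM, hg, Finset.prod_insert hi, mul_assoc]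

theorem exists_schwartzPairing_eq_multiIndexWeight_pow_mul (H : IsHermiteLadder b h) (m : ℕ)
    (f : 𝓢(E, ℝ)) :
    ∃ g, ∀ γ, schwartzPairing (h γ) g = multiIndexWeight γ ^ m * schwartzPairing (h γ) f := by
  induction m with
  | zero => exact ⟨f, fun γ => by rw [pow_zero, one_mul]⟩
  | succ m ih =>
    obtain ⟨g, hg⟩ := ih
    obtain ⟨g', hg'⟩ := H.exists_schwartzPairing_eq_prod_mul Finset.univ g
    exact ⟨g', fun γ => by rw [hg', hg, ← multiIndexWeight, pow_succ', mul_assoc]⟩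

theorem isBigO_schwartzPairing (H : IsHermiteLadder b h)
    (h_sup : (fun γ => SchwartzMap.seminorm ℝ 0 0 (h γ)) =O[⊤] multiIndexWeight) (f : 𝓢(E, ℝ))
    (m : ℕ) :
    (fun γ => schwartzPairing (h γ) f) =O[⊤]
      fun γ => (multiIndexWeight γ ^ m)⁻¹ * multiIndexWeight γ := by
  obtain ⟨g, hg⟩ := H.exists_schwartzPairing_eq_multiIndexWeight_pow_mul m f
  have pairing_g : (fun γ => schwartzPairing (h γ) g) =O[⊤] multiIndexWeight := by
    refine .trans (isBigO_top.2 ⟨∫ x, ‖g x‖, fun γ => ?_⟩) h_sup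
    rw [Real.norm_of_nonneg (apply_nonneg (SchwartzMap.seminorm ℝ 0 0) (h γ)), mul_comm]
    exact abs_schwartzPairing_le (h γ) g
  refine ((isBigO_refl (fun γ => (multiIndexWeight γ ^ m)⁻¹) ⊤).mul pairing_g).congr_left
    fun γ => ?_
  rw [hg, inv_mul_cancel_left₀ (pow_pos (multiIndexWeight_pos γ) m).ne']

theorem summable_seminorm_schwartzPairing_smul (H : IsHermiteLadder b h)
    (h_sup : (fun γ => SchwartzMap.seminorm ℝ 0 0 (h γ)) =O[⊤] multiIndexWeight) (f : 𝓢(E, ℝ))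
    (k l : ℕ) : Summable fun γ => SchwartzMap.seminorm ℝ k l (schwartzPairing (h γ) f • h γ) := by
  simp only [map_smul_eq_mul]
  refine summable_of_isBigO summable_multiIndexWeight_sq_inv (.mono ?_ le_top)
  refine ((H.isBigO_schwartzPairing h_sup f (k + l + 4)).norm_left.mul
    (H.isBigO_seminorm h_sup k l)).congr_right fun γ => ?_
  have := (multiIndexWeight_pos γ).ne'
  field_simp
  ring

theorem schwartzPairing_positionCLM_eq_zero (H : IsHermiteLadder b h) {f : 𝓢(E, ℝ)}
    (hf : ∀ γ, schwartzPairing (h γ) f = 0) (ξ : E) (γ : ι → ℕ) :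
    schwartzPairing (h γ) (positionCLM ξ f) = 0 := by
  rw [positionCLM_eq_sum b, map_sum]
  refine Finset.sum_eq_zero fun i _ => ?_
  rw [map_smul, positionCLM_eq_annihilationCLM_add_creationCLM, map_add,
    schwartzPairing_annihilationCLM, schwartzPairing_creationCLM, H.creationCLM_eq,
    H.annihilationCLM_eq, schwartzPairing_smul_left, schwartzPairing_smul_left, hf, hf]
  simp only [mul_zero, add_zero, smul_zero]

theorem schwartzPairing_iterate_positionCLM_eq_zero (H : IsHermiteLadder b h) {f : 𝓢(E, ℝ)}
    (hf : ∀ γ, schwartzPairing (h γ) f = 0) (ξ : E) (n : ℕ) :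
    ∀ γ, schwartzPairing (h γ) ((positionCLM ξ)^[n] f) = 0 := by
  induction n with
  | zero => exact hf
  | succ n ih =>
    rw [Function.iterate_succ_apply']
    exact H.schwartzPairing_positionCLM_eq_zero ih ξ

theorem eq_zero_of_forall_schwartzPairing_eq_zero (H : IsHermiteLadder b h) {c : ℝ} (hc : c ≠ 0)
    (h_zero : ∀ x, h 0 x = c * Real.exp (-(‖x‖ ^ 2 / 4))) {f : 𝓢(E, ℝ)}
    (hf : ∀ γ, schwartzPairing (h γ) f = 0) : f = 0 := by
  ext x
  refine congr_fun (eq_zero_of_forall_integral_inner_pow_mul_exp_neg_mul_eq_zero f.continuous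
    f.integrable fun ξ n => mul_left_cancel₀ hc ?_) x
  calc c * ∫ x, inner ℝ ξ x ^ n * (Real.exp (-(‖x‖ ^ 2 / 4)) * f x)
      = schwartzPairing (h 0) ((positionCLM ξ)^[n] f) := by
        rw [← integral_const_mul, schwartzPairing_apply]
        congr with x
        rw [iterate_positionCLM_apply, h_zero, smul_eq_mul]
        ring
    _ = c * 0 := by rw [H.schwartzPairing_iterate_positionCLM_eq_zero hf, mul_zero]

theorem hasSum_schwartzPairing_smul (H : IsHermiteLadder b h)
    (h_orth : ∀ α β, schwartzPairing (h α) (h β) = if α = β then 1 else 0)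
    (h_sup : (fun γ => SchwartzMap.seminorm ℝ 0 0 (h γ)) =O[⊤] multiIndexWeight) {c : ℝ}
    (hc : c ≠ 0) (h_zero : ∀ x, h 0 x = c * Real.exp (-(‖x‖ ^ 2 / 4))) (f : 𝓢(E, ℝ)) :
    HasSum (fun γ => schwartzPairing (h γ) f • h γ) f := by
  have hasSum_g := hasSum_schwartzTsum (H.summable_seminorm_schwartzPairing_smul h_sup f)
  set g := schwartzTsum _ (H.summable_seminorm_schwartzPairing_smul h_sup f)
  have pairing_g (α : ι → ℕ) : schwartzPairing (h α) g = schwartzPairing (h α) f := by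
    refine (hasSum_g.mapL (schwartzPairing (h α))).unique ?_
    convert hasSum_ite_eq α (schwartzPairing (h α) f) using 2 with γ
    simp +contextual [h_orth, eq_comm]
  have g_eq_f : g = f := sub_eq_zero.1 <|
    H.eq_zero_of_forall_schwartzPairing_eq_zero hc h_zero fun γ => by
      rw [map_sub, pairing_g, sub_self]
  rwa [g_eq_f] at hasSum_g

end Coefficients

end IsHermiteLadder

end HermiteLadder

section GaussianIntegrals

theorem integrable_polynomial_mul_exp_neg_mul_sq {b : ℝ} (hb : 0 < b) (p : Polynomial ℝ) :
    Integrable fun x : ℝ => p.eval x * Real.exp (-b * x ^ 2) := by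
  induction p using Polynomial.induction_on' with
  | add p q hp hq =>
    simp only [Polynomial.eval_add, add_mul]
    exact hp.add hq
  | monomial n c =>
    have := (integrable_rpow_mul_exp_neg_mul_sq hb
      (s := n) (neg_one_lt_zero.trans_le n.cast_nonneg)).const_mul c
    simpa only [Polynomial.eval_monomial, Real.rpow_natCast, mul_assoc] using this

theorem sq_le_integral_sq_add_deriv_sq {f f' : ℝ → ℝ} (hderiv : ∀ x, HasDerivAt f (f' x) x)
    (hf : MemLp f 2) (hf' : MemLp f' 2) (x : ℝ) : f x ^ 2 ≤ ∫ y, f y ^ 2 + f' y ^ 2 := by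
  have hasDerivAt_sq (y : ℝ) : HasDerivAt (fun y => f y ^ 2) (2 * (f y * f' y)) y :=
    ((hderiv y).fun_pow 2).congr_deriv (by ring)
  have integrable_sq : Integrable fun y => f y ^ 2 := hf.integrable_sq
  have integrable_deriv : Integrable fun y => 2 * (f y * f' y) :=
    (hf.integrable_mul hf').const_mul 2
  have integrable_energy : Integrable fun y => f y ^ 2 + f' y ^ 2 :=
    integrable_sq.add hf'.integrable_sq
  have tendsto_sq : Tendsto (fun y => f y ^ 2) atBot (𝓝 0) :=
    tendsto_zero_of_hasDerivAt_of_integrableOn_Iic (a := x) (fun y _ => hasDerivAt_sq y)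
      integrable_deriv.integrableOn integrable_sq.integrableOn
  calc f x ^ 2 = ∫ y in Set.Iic x, 2 * (f y * f' y) := by
        rw [integral_Iic_of_hasDerivAt_of_tendsto' (fun y _ => hasDerivAt_sq y)
          integrable_deriv.integrableOn tendsto_sq, sub_zero]
    _ ≤ ∫ y in Set.Iic x, (f y ^ 2 + f' y ^ 2) :=
        setIntegral_mono integrable_deriv.integrableOn integrable_energy.integrableOn fun y => by
          simpa only [mul_assoc] using two_mul_le_add_sq (f y) (f' y)
    _ ≤ ∫ y, f y ^ 2 + f' y ^ 2 :=
        setIntegral_le_integral integrable_energy (.of_forall fun y => by positivity)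

end GaussianIntegrals

section HermiteFunctions

open scoped Nat

theorem derivative_hermite (n : ℕ) :
    Polynomial.derivative (Polynomial.hermite n) = n * Polynomial.hermite (n - 1) := by
  induction n with
  | zero => simp
  | succ n ih =>
    rcases n with _ | n
    · simp
    · rw [Polynomial.hermite_succ, map_sub, Polynomial.derivative_mul, Polynomial.derivative_X, ih,
        Polynomial.derivative_mul, Polynomial.derivative_natCast]
      simp only [Nat.add_sub_cancel]
      push_cast
      linear_combination (-((n : Polynomial ℤ) + 1)) * Polynomial.hermite_succ n

/-- The constant normalizing `hermiteFun n` in `L²`. -/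
noncomputable def hermiteNormalization (n : ℕ) : ℝ := (√(√(2 * Real.pi) * n !))⁻¹

theorem hermiteNormalization_pos (n : ℕ) : 0 < hermiteNormalization n := by
  unfold hermiteNormalization
  positivity

theorem hermiteNormalization_eq_sqrt_succ_mul (n : ℕ) :
    hermiteNormalization n = √(n + 1) * hermiteNormalization (n + 1) := by
  rw [hermiteNormalization, hermiteNormalization, Nat.factorial_succ, Nat.cast_mul,
    Nat.cast_succ, mul_left_comm, Real.sqrt_mul (by positivity) (√(2 * Real.pi) * n !), mul_inv,
    mul_inv_cancel_left₀ (by positivity)]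

theorem hermiteNormalization_zero_sq : hermiteNormalization 0 ^ 2 = (√(2 * Real.pi))⁻¹ := by
  rw [hermiteNormalization, inv_pow, Real.sq_sqrt (by positivity), Nat.factorial_zero,
    Nat.cast_one, mul_one]

theorem hermiteFun_eq (n : ℕ) (x : ℝ) :
    hermiteFun n x = hermiteNormalization n * Real.exp (-(x ^ 2 / 4)) *
      Polynomial.aeval x (Polynomial.hermite n) := by
  rw [hermiteFun, hermitePoly, Polynomial.hermite_eq_deriv_gaussian', iteratedDeriv_eq_iterate,
    hermiteNormalization]
  ring

theorem hermiteFun_zero (x : ℝ) :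
    hermiteFun 0 x = hermiteNormalization 0 * Real.exp (-(x ^ 2 / 4)) := by
  simp [hermiteFun_eq]

theorem mul_hermiteFun (n : ℕ) (x : ℝ) :
    x * hermiteFun n x = √(n + 1) * hermiteFun (n + 1) x + √n * hermiteFun (n - 1) x := by
  have succ_term : √(n + 1) * hermiteFun (n + 1) x = hermiteNormalization n *
      Real.exp (-(x ^ 2 / 4)) * Polynomial.aeval x (Polynomial.hermite (n + 1)) := by
    rw [hermiteFun_eq, hermiteNormalization_eq_sqrt_succ_mul n]
    ring
  have pred_term : √n * hermiteFun (n - 1) x = n * hermiteNormalization n *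
      Real.exp (-(x ^ 2 / 4)) * Polynomial.aeval x (Polynomial.hermite (n - 1)) := by
    rcases n with _ | n
    · simp
    · rw [Nat.add_sub_cancel, hermiteFun_eq, hermiteNormalization_eq_sqrt_succ_mul n]
      push_cast
      linear_combination (hermiteNormalization (n + 1) * Real.exp (-(x ^ 2 / 4)) *
        Polynomial.aeval x (Polynomial.hermite n)) *
          Real.mul_self_sqrt (show (0 : ℝ) ≤ n + 1 by positivity)
  rw [succ_term, pred_term, hermiteFun_eq, Polynomial.hermite_succ, derivative_hermite, map_sub,
    map_mul, map_mul, Polynomial.aeval_X, map_natCast]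
  ring

theorem hasDerivAt_hermiteFun_raising (n : ℕ) (x : ℝ) :
    HasDerivAt (hermiteFun n) (x / 2 * hermiteFun n x - √(n + 1) * hermiteFun (n + 1) x) x := by
  have gaussian : HasDerivAt (fun x : ℝ => Real.exp (-(x ^ 2 / 4)))
      (Real.exp (-(x ^ 2 / 4)) * -(2 * x / 4)) x := by
    simpa using ((hasDerivAt_pow 2 x).div_const 4).neg.exp
  rw [funext (hermiteFun_eq n)]
  refine ((gaussian.const_mul _).mul (Polynomial.hasDerivAt_aeval _ x)).congr_deriv ?_
  rw [hermiteFun_eq, hermiteNormalization_eq_sqrt_succ_mul n, Polynomial.hermite_succ, map_sub,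
    map_mul, Polynomial.aeval_X]
  ring

theorem hasDerivAt_hermiteFun_lowering (n : ℕ) (x : ℝ) :
    HasDerivAt (hermiteFun n) (√n * hermiteFun (n - 1) x - x / 2 * hermiteFun n x) x :=
  (hasDerivAt_hermiteFun_raising n x).congr_deriv (by linear_combination mul_hermiteFun n x)

theorem continuous_hermiteFun (n : ℕ) : Continuous (hermiteFun n) :=
  continuous_iff_continuousAt.2 fun x => (hasDerivAt_hermiteFun_raising n x).continuousAt

theorem integrable_hermiteFun_mul (m n : ℕ) :
    Integrable fun x => hermiteFun m x * hermiteFun n x := by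
  let p := (Polynomial.hermite m * Polynomial.hermite n).map (Int.castRingHom ℝ)
  refine ((integrable_polynomial_mul_exp_neg_mul_sq one_half_pos p).const_mul
    (hermiteNormalization m * hermiteNormalization n)).congr (.of_forall fun x => ?_)
  have gaussian_sq : Real.exp (-(1 / 2) * x ^ 2) =
      Real.exp (-(x ^ 2 / 4)) * Real.exp (-(x ^ 2 / 4)) := by
    rw [← Real.exp_add]
    ring_nf
  simp only [p, hermiteFun_eq, gaussian_sq, Polynomial.eval_map, Polynomial.aeval_def,
    Polynomial.eval₂_mul, algebraMap_int_eq]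
  ring

theorem memLp_two_hermiteFun (n : ℕ) : MemLp (hermiteFun n) 2 :=
  (memLp_two_iff_integrable_sq (continuous_hermiteFun n).aestronglyMeasurable).2 <| by
    simpa only [sq] using integrable_hermiteFun_mul n n

theorem sqrt_succ_mul_integral_hermiteFun_succ_mul (m n : ℕ) :
    √(m + 1) * ∫ x, hermiteFun (m + 1) x * hermiteFun n x =
      √n * ∫ x, hermiteFun m x * hermiteFun (n - 1) x := by
  have integrable_lower : Integrable fun x => √n * (hermiteFun m x * hermiteFun (n - 1) x) :=
    (integrable_hermiteFun_mul m (n - 1)).const_mul _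
  have integrable_raise : Integrable fun x => √(m + 1) * (hermiteFun (m + 1) x * hermiteFun n x) :=
    (integrable_hermiteFun_mul (m + 1) n).const_mul _
  have deriv_product (x : ℝ) : HasDerivAt (fun x => hermiteFun m x * hermiteFun n x)
      (√n * (hermiteFun m x * hermiteFun (n - 1) x) -
        √(m + 1) * (hermiteFun (m + 1) x * hermiteFun n x)) x :=
    ((hasDerivAt_hermiteFun_raising m x).mul (hasDerivAt_hermiteFun_lowering n x)).congr_deriv
      (by ring)
  have := integral_eq_zero_of_hasDerivAt_of_integrable deriv_product
    (integrable_lower.sub integrable_raise) (integrable_hermiteFun_mul m n)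
  rw [integral_sub integrable_lower integrable_raise, integral_const_mul, integral_const_mul,
    sub_eq_zero] at this
  exact this.symm

theorem integral_hermiteFun_zero_mul_self : ∫ x, hermiteFun 0 x * hermiteFun 0 x = 1 := by
  have gaussian (x : ℝ) : hermiteFun 0 x * hermiteFun 0 x =
      (√(2 * Real.pi))⁻¹ * Real.exp (-(1 / 2) * x ^ 2) := by
    rw [hermiteFun_zero, mul_mul_mul_comm, ← sq, hermiteNormalization_zero_sq, ← Real.exp_add]
    ring_nf
  simp only [gaussian]
  rw [integral_const_mul, integral_gaussian, div_div_eq_mul_div, div_one, mul_comm Real.pi]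
  exact inv_mul_cancel₀ (by positivity)

theorem integral_hermiteFun_mul (m n : ℕ) :
    ∫ x, hermiteFun m x * hermiteFun n x = if m = n then 1 else 0 := by
  have sqrt_ne_zero (k : ℕ) : √((k : ℝ) + 1) ≠ 0 := by positivity
  induction m generalizing n with
  | zero =>
    rcases n with _ | n
    · exact integral_hermiteFun_zero_mul_self
    · simpa [sqrt_ne_zero, mul_comm] using sqrt_succ_mul_integral_hermiteFun_succ_mul n 0
  | succ m ih =>
    refine mul_left_cancel₀ (sqrt_ne_zero m) ?_
    rw [sqrt_succ_mul_integral_hermiteFun_succ_mul]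
    rcases n with _ | n
    · simp
    · rw [Nat.add_sub_cancel, ih]
      simp only [Nat.add_right_cancel_iff]
      split_ifs with hmn
      · rw [hmn, Nat.cast_succ]
      · rw [mul_zero, mul_zero]

theorem hasDerivAt_hermiteFun (n : ℕ) (x : ℝ) : HasDerivAt (hermiteFun n)
    ((√n * hermiteFun (n - 1) x - √(n + 1) * hermiteFun (n + 1) x) / 2) x :=
  (hasDerivAt_hermiteFun_lowering n x).congr_deriv
    (by linear_combination (-1 / 2) * mul_hermiteFun n x)

theorem hermiteFun_sq_le (n : ℕ) (x : ℝ) : hermiteFun n x ^ 2 ≤ n + 3 / 2 := by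
  let f' (y : ℝ) := (√n * hermiteFun (n - 1) y - √(n + 1) * hermiteFun (n + 1) y) / 2
  have memLp_deriv : MemLp f' 2 := by
    simpa only [div_eq_inv_mul, Pi.sub_apply, f'] using
      (((memLp_two_hermiteFun (n - 1)).const_mul √n).sub
        ((memLp_two_hermiteFun (n + 1)).const_mul √(n + 1))).const_mul 2⁻¹
  have deriv_sq_le (y : ℝ) :
      f' y ^ 2 ≤ n / 2 * hermiteFun (n - 1) y ^ 2 + (n + 1) / 2 * hermiteFun (n + 1) y ^ 2 := by
    have sq_sqrt : √(n : ℝ) ^ 2 = n := Real.sq_sqrt (by positivity)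
    have sq_sqrt_succ : √((n : ℝ) + 1) ^ 2 = n + 1 := Real.sq_sqrt (by positivity)
    linear_combination
      4⁻¹ * sq_nonneg (√n * hermiteFun (n - 1) y + √(n + 1) * hermiteFun (n + 1) y) +
        2⁻¹ * hermiteFun (n - 1) y ^ 2 * sq_sqrt + 2⁻¹ * hermiteFun (n + 1) y ^ 2 * sq_sqrt_succ
  have integral_sq (k : ℕ) : ∫ y, hermiteFun k y ^ 2 = 1 := by
    simpa [sq] using integral_hermiteFun_mul k k
  have integrable_sq (k : ℕ) (c : ℝ) : Integrable fun y => c * hermiteFun k y ^ 2 :=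
    (memLp_two_hermiteFun k).integrable_sq.const_mul c
  calc hermiteFun n x ^ 2 ≤ ∫ y, hermiteFun n y ^ 2 + f' y ^ 2 :=
        sq_le_integral_sq_add_deriv_sq (hasDerivAt_hermiteFun n) (memLp_two_hermiteFun n)
          memLp_deriv x
    _ = (∫ y, hermiteFun n y ^ 2) + ∫ y, f' y ^ 2 :=
        integral_add (memLp_two_hermiteFun n).integrable_sq memLp_deriv.integrable_sq
    _ ≤ (∫ y, hermiteFun n y ^ 2) +
          ∫ y, n / 2 * hermiteFun (n - 1) y ^ 2 + (n + 1) / 2 * hermiteFun (n + 1) y ^ 2 := by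
        exact add_le_add le_rfl (integral_mono memLp_deriv.integrable_sq
          ((integrable_sq _ _).add (integrable_sq _ _)) deriv_sq_le)
    _ = n + 3 / 2 := by
        rw [integral_add (integrable_sq _ _) (integrable_sq _ _), integral_const_mul,
          integral_const_mul, integral_sq, integral_sq, integral_sq]
        ring

theorem abs_hermiteFun_le (n : ℕ) (x : ℝ) : |hermiteFun n x| ≤ 2 * (n + 1) :=
  abs_le_of_sq_le_sq (by nlinarith [hermiteFun_sq_le n x, n.cast_nonneg (α := ℝ)]) (by positivity)

end HermiteFunctions

section MultivariateHermite

variable {d : ℕ}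

theorem hermiteFunMulti_eq_mul_prod_erase (i : Fin d) {γ γ' : Fin d → ℕ}
    {x x' : EuclideanSpace ℝ (Fin d)} (hγ : ∀ j ≠ i, γ' j = γ j) (hx : ∀ j ≠ i, x' j = x j) :
    hermiteFunMulti d γ' x' =
      hermiteFun (γ' i) (x' i) * ∏ j ∈ Finset.univ.erase i, hermiteFun (γ j) (x j) := by
  rw [hermiteFunMulti, ← Finset.mul_prod_erase _ _ (Finset.mem_univ i)]
  congr 1
  refine Finset.prod_congr rfl fun j hj => ?_
  rw [hγ j (Finset.ne_of_mem_erase hj), hx j (Finset.ne_of_mem_erase hj)]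

theorem hasLineDerivAt_hermiteFunMulti (i : Fin d) (γ : Fin d → ℕ)
    (x : EuclideanSpace ℝ (Fin d)) {c : ℝ} (hc : HasDerivAt (hermiteFun (γ i)) c (x i)) :
    HasLineDerivAt ℝ (hermiteFunMulti d γ)
      (c * ∏ j ∈ Finset.univ.erase i, hermiteFun (γ j) (x j)) x
      (EuclideanSpace.basisFun (Fin d) ℝ i) := by
  have along_line (t : ℝ) :
      hermiteFunMulti d γ (x + t • EuclideanSpace.basisFun (Fin d) ℝ i) =
        hermiteFun (γ i) (x i + t) * ∏ j ∈ Finset.univ.erase i, hermiteFun (γ j) (x j) := by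
    rw [hermiteFunMulti_eq_mul_prod_erase i (fun _ _ => rfl) (x := x) fun j hj => by simp [hj]]
    simp
  rw [HasLineDerivAt, funext along_line]
  exact (HasDerivAt.comp_const_add (x i) 0 (by rwa [add_zero])).mul_const _

theorem hermiteFunMulti_zero (x : EuclideanSpace ℝ (Fin d)) :
    hermiteFunMulti d 0 x = hermiteNormalization 0 ^ d * Real.exp (-(‖x‖ ^ 2 / 4)) := by
  simp only [hermiteFunMulti, Pi.zero_apply, hermiteFun_zero, Finset.prod_mul_distrib,
    Finset.prod_const, Finset.card_univ, Fintype.card_fin, ← Real.exp_sum,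
    EuclideanSpace.real_norm_sq_eq, Finset.sum_neg_distrib, Finset.sum_div]

theorem integral_hermiteFunMulti_mul (α β : Fin d → ℕ) :
    ∫ x, hermiteFunMulti d α x * hermiteFunMulti d β x = if α = β then 1 else 0 := by
  calc ∫ x, hermiteFunMulti d α x * hermiteFunMulti d β x
      = ∫ y : Fin d → ℝ, ∏ i, hermiteFun (α i) (y i) * hermiteFun (β i) (y i) := by
        rw [← (PiLp.volume_preserving_toLp (Fin d)).integral_comp
          (MeasurableEquiv.toLp 2 (Fin d → ℝ)).measurableEmbedding]
        simp only [hermiteFunMulti, Finset.prod_mul_distrib]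
    _ = ∏ i, if α i = β i then 1 else 0 := by
        rw [integral_fintype_prod_volume_eq_prod fun i t =>
          hermiteFun (α i) t * hermiteFun (β i) t]
        simp only [integral_hermiteFun_mul]
    _ = if α = β then 1 else 0 := by simp [Finset.prod_ite_zero, funext_iff]

theorem abs_hermiteFunMulti_le (γ : Fin d → ℕ) (x : EuclideanSpace ℝ (Fin d)) :
    |hermiteFunMulti d γ x| ≤ 2 ^ d * multiIndexWeight γ := by
  calc |hermiteFunMulti d γ x| = ∏ i, |hermiteFun (γ i) (x i)| := Finset.abs_prod _ _
    _ ≤ ∏ i, (2 * ((γ i : ℝ) + 1)) :=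
        Finset.prod_le_prod (fun _ _ => abs_nonneg _) fun i _ => abs_hermiteFun_le (γ i) (x i)
    _ = 2 ^ d * multiIndexWeight γ := by
        rw [Finset.prod_mul_distrib, Finset.prod_const, Finset.card_univ, Fintype.card_fin,
          multiIndexWeight]

variable {h : (Fin d → ℕ) → 𝓢(EuclideanSpace ℝ (Fin d), ℝ)}

theorem isBigO_seminorm_zero_hermiteFunMulti (hh : ∀ β x, h β x = hermiteFunMulti d β x) :
    (fun γ => SchwartzMap.seminorm ℝ 0 0 (h γ)) =O[⊤] multiIndexWeight := by
  refine isBigO_top.2 ⟨2 ^ d, fun γ => ?_⟩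
  have weight_nonneg : 0 ≤ multiIndexWeight γ := (multiIndexWeight_pos γ).le
  rw [Real.norm_of_nonneg (apply_nonneg _ _), Real.norm_of_nonneg weight_nonneg]
  refine SchwartzMap.seminorm_le_bound ℝ 0 0 _ (by positivity) fun x => ?_
  rw [pow_zero, one_mul, norm_iteratedFDeriv_zero, hh]
  exact abs_hermiteFunMulti_le γ x

theorem annihilationCLM_hermiteFunMulti (hh : ∀ β x, h β x = hermiteFunMulti d β x) (i : Fin d)
    (γ : Fin d → ℕ) :
    annihilationCLM (EuclideanSpace.basisFun (Fin d) ℝ i) (h γ) =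
      √(γ i) • h (γ - Pi.single i 1) := by
  ext x
  have lowered : hermiteFunMulti d (γ - Pi.single i 1) x =
      hermiteFun (γ i - 1) (x i) * ∏ j ∈ Finset.univ.erase i, hermiteFun (γ j) (x j) := by
    rw [hermiteFunMulti_eq_mul_prod_erase i (γ := γ) (fun j hj => by simp [hj]) fun _ _ => rfl,
      Pi.sub_apply, Pi.single_eq_same]
  have unshifted : hermiteFunMulti d γ x =
      hermiteFun (γ i) (x i) * ∏ j ∈ Finset.univ.erase i, hermiteFun (γ j) (x j) :=
    hermiteFunMulti_eq_mul_prod_erase i (fun _ _ => rfl) fun _ _ => rfl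
  rw [annihilationCLM_apply, _root_.add_apply, _root_.smul_apply, _root_.smul_apply,
    positionCLM_apply, SchwartzMap.lineDerivOp_apply, EuclideanSpace.basisFun_inner,
    funext (hh γ), hh, lowered, unshifted,
    (hasLineDerivAt_hermiteFunMulti i γ x (hasDerivAt_hermiteFun_lowering (γ i) (x i))).lineDeriv]
  simp only [smul_eq_mul]
  ring

theorem creationCLM_hermiteFunMulti (hh : ∀ β x, h β x = hermiteFunMulti d β x) (i : Fin d)
    (γ : Fin d → ℕ) :
    creationCLM (EuclideanSpace.basisFun (Fin d) ℝ i) (h γ) =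
      √(γ i + 1) • h (γ + Pi.single i 1) := by
  ext x
  have raised : hermiteFunMulti d (γ + Pi.single i 1) x =
      hermiteFun (γ i + 1) (x i) * ∏ j ∈ Finset.univ.erase i, hermiteFun (γ j) (x j) := by
    rw [hermiteFunMulti_eq_mul_prod_erase i (γ := γ) (fun j hj => by simp [hj]) fun _ _ => rfl,
      Pi.add_apply, Pi.single_eq_same]
  have unshifted : hermiteFunMulti d γ x =
      hermiteFun (γ i) (x i) * ∏ j ∈ Finset.univ.erase i, hermiteFun (γ j) (x j) :=
    hermiteFunMulti_eq_mul_prod_erase i (fun _ _ => rfl) fun _ _ => rfl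
  rw [creationCLM_apply, _root_.sub_apply, _root_.smul_apply, _root_.smul_apply,
    positionCLM_apply, SchwartzMap.lineDerivOp_apply, EuclideanSpace.basisFun_inner,
    funext (hh γ), hh, raised, unshifted,
    (hasLineDerivAt_hermiteFunMulti i γ x (hasDerivAt_hermiteFun_raising (γ i) (x i))).lineDeriv]
  simp only [smul_eq_mul]
  ring

theorem hasSum_hermite_expansion (hh : ∀ β x, h β x = hermiteFunMulti d β x)
    (f : 𝓢(EuclideanSpace ℝ (Fin d), ℝ)) : HasSum (fun γ => schwartzPairing (h γ) f • h γ) f := by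
  have ladder : IsHermiteLadder (EuclideanSpace.basisFun (Fin d) ℝ) h :=
    ⟨annihilationCLM_hermiteFunMulti hh, creationCLM_hermiteFunMulti hh⟩
  have orthonormal (α β : Fin d → ℕ) : schwartzPairing (h α) (h β) = if α = β then 1 else 0 := by
    simpa only [schwartzPairing_apply, hh] using integral_hermiteFunMulti_mul α β
  exact ladder.hasSum_schwartzPairing_smul orthonormal (isBigO_seminorm_zero_hermiteFunMulti hh)
    (pow_pos (hermiteNormalization_pos 0) d).ne'
    (fun x => (hh 0 x).trans (hermiteFunMulti_zero x)) f

end MultivariateHermite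

/-- The Hermite regularization of a tempered distribution commutes with
translation up to association: the family `T(h_γ)·∫ h_γ(y) φ(y+x) dy` is
absolutely summable with sum `T(τ_{-x} φ)`. -/
theorem hermite_regularization_translation (d : ℕ)
    (h : (Fin d → ℕ) → SchwartzMap (EuclideanSpace ℝ (Fin d)) ℝ)
    (hh : ∀ β x, h β x = hermiteFunMulti d β x)
    (T : SchwartzMap (EuclideanSpace ℝ (Fin d)) ℝ →L[ℝ] ℝ)
    (x : EuclideanSpace ℝ (Fin d))
    (φ ψ : SchwartzMap (EuclideanSpace ℝ (Fin d)) ℝ)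
    (hψ : ∀ y, ψ y = φ (y + x)) :
    Summable (fun γ : Fin d → ℕ =>
      |T (h γ) * ∫ y, hermiteFunMulti d γ y * φ (y + x)|) ∧
    ∑' γ : Fin d → ℕ, T (h γ) * (∫ y, hermiteFunMulti d γ y * φ (y + x)) = T ψ := by
  have expansion : HasSum (fun γ => T (schwartzPairing (h γ) ψ • h γ)) (T ψ) :=
    (hasSum_hermite_expansion hh ψ).mapL T
  simp only [map_smul, smul_eq_mul, mul_comm _ (T _), schwartzPairing_apply, hh, hψ] at expansion
  exact ⟨expansion.summable.abs, expansion.tsum_eq⟩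
end

section
/- Let T ∈ S′(ℝ^d) be a tempered distribution. Then there exist q ∈ ℕ with ‖T‖_{−q} := (Σ_{γ∈ℕ^d} (2|γ|+d)^{−2q} T(h_γ)²)^{1/2} < ∞ and a polynomial P with nonnegative coefficients such that for every finite subset F of ℕ^d, every x ∈ ℝ^d, and every φ in the Schwartz space S(ℝ^d), |Σ_{γ∈F} T(h_γ) ∫_{ℝ^d} h_γ(y) φ(y+x) dy| ≤ P(|x|) · ‖T‖_{−q} · |φ|_q. -/
open MeasureTheory

noncomputable def hermCoeff (d : ℕ) (f : EuclideanSpace ℝ (Fin d) → ℝ) (β : Fin d → ℕ) : ℝ :=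
  ∫ x, f x * hermiteFunMulti d β x

noncomputable def hermNorm (d n : ℕ) (f : EuclideanSpace ℝ (Fin d) → ℝ) : ℝ :=
  Real.sqrt (∑' β : Fin d → ℕ,
    (((2 * ∑ i, β i) + d : ℕ) : ℝ) ^ (2 * n) * hermCoeff d f β ^ 2)

/-!
Cauchy's estimate for the complex Gaussian bounds the Hermite functions polynomially in their index,
and the ladder relations carry this over to the Schwartz seminorms of `h γ`; hence `γ ↦ T (h γ)`
grows polynomially, which yields `q`. By Cauchy–Schwarz, the partial sums are then controlled by the
Hermite norm of the translate of `φ` by `x`.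

The creation operators shift Hermite coefficients, and they commute with translation by `x` up to
multiplication by a multiple of a coordinate of `x`. Trading powers of the weight `2|γ| + d` for
creation operators therefore bounds the Hermite norms of translates by induction on the order. The
order-zero case is Parseval's identity together with translation invariance of Lebesgue measure.
Parseval's identity rests on completeness: if `f ∈ L²` is orthogonal to all Hermite functions, then
`f` times a Gaussian has vanishing moments, so its Fourier transform is zero.
-/

namespace HermiteExpansion

open Asymptotics Filter
open scoped LineDeriv SchwartzMap

section OneDimensional

open Polynomial in
lemma hermitePoly_eq_aeval (n : ℕ) (x : ℝ) : hermitePoly n x = aeval x (hermite n) := by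
  rw [hermite_eq_deriv_gaussian, hermitePoly, iteratedDeriv_eq_iterate, Real.exp_neg]
  field_simp

open Polynomial in
lemma derivative_hermite_succ (n : ℕ) :
    derivative (hermite (n + 1)) = (n + 1 : ℕ) • hermite n := by
  induction n with
  | zero => simp
  | succ n ih =>
    rw [hermite_succ (n + 1), derivative_sub, derivative_mul, ih, derivative_smul, hermite_succ n]
    simp only [derivative_X, nsmul_eq_mul, Nat.cast_add, Nat.cast_one]
    ring

lemma mul_hermitePoly (n : ℕ) (x : ℝ) :
    x * hermitePoly n x = hermitePoly (n + 1) x + n * hermitePoly (n - 1) x := by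
  rw [hermitePoly_eq_aeval, hermitePoly_eq_aeval, hermitePoly_eq_aeval, Polynomial.hermite_succ]
  cases n with
  | zero => simp
  | succ n =>
    simp only [derivative_hermite_succ, Nat.add_sub_cancel, map_sub, map_mul, map_natCast,
      Polynomial.aeval_X, nsmul_eq_mul, sub_add_cancel]

lemma hasDerivAt_hermitePoly (n : ℕ) (x : ℝ) :
    HasDerivAt (hermitePoly n) (x * hermitePoly n x - hermitePoly (n + 1) x) x := by
  rw [funext (hermitePoly_eq_aeval n)]
  refine (Polynomial.hasDerivAt_aeval (Polynomial.hermite n) x).congr_deriv ?_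
  simp [hermitePoly_eq_aeval, Polynomial.hermite_succ]

lemma sqrt_mul_factorial_succ (c : ℝ) (n : ℕ) :
    √(c * (n + 1).factorial) = √(n + 1) * √(c * n.factorial) := by
  rw [← Real.sqrt_mul (by positivity), Nat.factorial_succ]
  push_cast
  ring_nf

lemma sqrt_succ_mul_hermiteFun_succ (n : ℕ) (x : ℝ) :
    √(n + 1) * hermiteFun (n + 1) x =
      (√(√(2 * Real.pi) * n.factorial))⁻¹ * Real.exp (-(x ^ 2 / 4)) * hermitePoly (n + 1) x := by
  rw [hermiteFun, sqrt_mul_factorial_succ]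
  field_simp

lemma sqrt_mul_hermiteFun_pred (n : ℕ) (x : ℝ) :
    √n * hermiteFun (n - 1) x = (√(√(2 * Real.pi) * n.factorial))⁻¹ * Real.exp (-(x ^ 2 / 4)) *
      (n * hermitePoly (n - 1) x) := by
  cases n with
  | zero => simp
  | succ n =>
    rw [hermiteFun, sqrt_mul_factorial_succ, Nat.add_sub_cancel, Nat.cast_add_one]
    field_simp
    rw [Real.sq_sqrt (by positivity)]

lemma mul_hermiteFun (n : ℕ) (x : ℝ) :
    x * hermiteFun n x = √n * hermiteFun (n - 1) x + √(n + 1) * hermiteFun (n + 1) x := by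
  rw [sqrt_succ_mul_hermiteFun_succ, sqrt_mul_hermiteFun_pred, hermiteFun]
  linear_combination
    (√(√(2 * Real.pi) * n.factorial))⁻¹ * Real.exp (-(x ^ 2 / 4)) * mul_hermitePoly n x

lemma hasDerivAt_hermiteFun (n : ℕ) (x : ℝ) :
    HasDerivAt (hermiteFun n) (x / 2 * hermiteFun n x - √(n + 1) * hermiteFun (n + 1) x) x := by
  have hexp : HasDerivAt (fun y : ℝ => Real.exp (-(y ^ 2 / 4)))
      (Real.exp (-(x ^ 2 / 4)) * (-(2 * x / 4))) x := by
    simpa using ((hasDerivAt_pow 2 x).div_const 4).neg.exp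
  refine ((hexp.const_mul _).mul (hasDerivAt_hermitePoly n x)).congr_deriv ?_
  rw [sqrt_succ_mul_hermiteFun_succ, hermiteFun]
  ring

lemma iteratedDeriv_re_comp_ofReal {f : ℂ → ℂ} (hf : Differentiable ℂ f) (n : ℕ) (x : ℝ) :
    iteratedDeriv n (fun y : ℝ => (f y).re) x = (iteratedDeriv n f x).re := by
  induction n generalizing f with
  | zero => simp
  | succ n ih =>
    have hderiv : deriv (fun y : ℝ => (f y).re) = fun y : ℝ => (deriv f y).re :=
      funext fun y => (hf y).hasDerivAt.real_of_complex.deriv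
    rw [iteratedDeriv_succ', iteratedDeriv_succ', hderiv, ih hf.deriv]

-- Cauchy's estimate on the circle of radius `r` around `x`, where
-- `-Re (z² / 2) ≤ r² / 2 - x² / 4` because `(Re z - x / 2)² ≥ 0`.
lemma exp_mul_abs_iteratedDeriv_gaussian_le (n : ℕ) (x : ℝ) {r : ℝ} (hr : 0 < r) :
    Real.exp (x ^ 2 / 4) * |iteratedDeriv n (fun y : ℝ => Real.exp (-(y ^ 2 / 2))) x| ≤
      n.factorial * Real.exp (r ^ 2 / 2) / r ^ n := by
  set f : ℂ → ℂ := fun z => Complex.exp (-(z ^ 2 / 2)) with hf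
  have hfd : Differentiable ℂ f := by fun_prop
  have hre : (fun y : ℝ => Real.exp (-(y ^ 2 / 2))) = fun y : ℝ => (f y).re := by
    ext y
    rw [hf, ← Complex.ofReal_re (Real.exp _)]
    push_cast
    rfl
  have hsphere (z : ℂ) (hz : z ∈ Metric.sphere (x : ℂ) r) :
      ‖f z‖ ≤ Real.exp (r ^ 2 / 2 - x ^ 2 / 4) := by
    have hnorm : (z.re - x) ^ 2 + z.im ^ 2 = r ^ 2 := by
      rw [← mem_sphere_iff_norm.1 hz, Complex.sq_norm, Complex.normSq_apply]
      simp [pow_two]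
    have hz_re : (-(z ^ 2 / 2)).re = -((z.re ^ 2 - z.im ^ 2) / 2) := by simp [pow_two]
    rw [Complex.norm_exp, Real.exp_le_exp, hz_re]
    nlinarith [sq_nonneg (z.re - x / 2)]
  rw [hre, iteratedDeriv_re_comp_ofReal hfd]
  calc Real.exp (x ^ 2 / 4) * |(iteratedDeriv n f x).re|
      ≤ Real.exp (x ^ 2 / 4) * (n.factorial * Real.exp (r ^ 2 / 2 - x ^ 2 / 4) / r ^ n) := by
        gcongr
        exact (Complex.abs_re_le_norm _).trans
          (Complex.norm_iteratedDeriv_le_of_forall_mem_sphere_norm_le n hr hfd.diffContOnCl hsphere)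
    _ = n.factorial * Real.exp (r ^ 2 / 2) / r ^ n := by
        rw [Real.exp_sub]
        field_simp

lemma abs_hermiteFun_le_of_pos (n : ℕ) (x : ℝ) {r : ℝ} (hr : 0 < r) :
    |hermiteFun n x| ≤ √n.factorial * Real.exp (r ^ 2 / 2) / r ^ n := by
  have hpi : 1 ≤ √(2 * Real.pi) := Real.one_le_sqrt.2 (by nlinarith [Real.pi_gt_three])
  have hexp : Real.exp (-(x ^ 2 / 4)) * Real.exp (x ^ 2 / 2) = Real.exp (x ^ 2 / 4) := by
    rw [← Real.exp_add]
    ring_nf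
  calc |hermiteFun n x|
      = (√(√(2 * Real.pi) * n.factorial))⁻¹ * (Real.exp (x ^ 2 / 4) *
          |iteratedDeriv n (fun y : ℝ => Real.exp (-(y ^ 2 / 2))) x|) := by
        simp only [hermiteFun, hermitePoly, abs_mul, abs_inv, abs_pow, abs_neg, abs_one, one_pow,
          one_mul, Real.abs_exp, abs_of_nonneg (Real.sqrt_nonneg _), ← hexp]
        ring
    _ ≤ (√n.factorial)⁻¹ * (n.factorial * Real.exp (r ^ 2 / 2) / r ^ n) := by
        gcongr
        · exact le_mul_of_one_le_left (by positivity) hpi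
        · exact exp_mul_abs_iteratedDeriv_gaussian_le n x hr
    _ = √n.factorial * Real.exp (r ^ 2 / 2) / r ^ n := by
        rw [← mul_div_assoc, ← mul_assoc, inv_mul_eq_div, Real.div_sqrt]

lemma factorial_mul_exp_succ_le (n : ℕ) :
    n.factorial * Real.exp (n + 1) ≤ Real.exp 1 * √(n + 1) * (n + 1) ^ n := by
  have hstirling : Stirling.stirlingSeq (n + 1) ≤ Real.exp 1 / √2 := by
    simpa [Stirling.stirlingSeq_one] using Stirling.stirlingSeq'_antitone (Nat.zero_le n)
  rw [Stirling.stirlingSeq, div_le_div_iff₀ (by positivity) (by positivity), div_pow,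
    ← Real.exp_nat_mul, Nat.factorial_succ, Real.sqrt_mul (by norm_num)] at hstirling
  push_cast at hstirling
  field_simp at hstirling
  refine le_of_mul_le_mul_left ?_ (by positivity : (0 : ℝ) < n + 1)
  linear_combination hstirling

lemma abs_hermiteFun_le (n : ℕ) (x : ℝ) : |hermiteFun n x| ≤ 2 * (n + 1) := by
  have hsqrt : √((n : ℝ) + 1) ≤ n + 1 :=
    Real.sqrt_le_iff.2 ⟨by positivity, by nlinarith [n.cast_nonneg (α := ℝ)]⟩
  refine (abs_hermiteFun_le_of_pos n x (r := √(n + 1)) (by positivity)).trans ?_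
  rw [div_le_iff₀ (by positivity)]
  refine le_of_sq_le_sq ?_ (by positivity)
  calc (√n.factorial * Real.exp (√(n + 1) ^ 2 / 2)) ^ 2
      = n.factorial * Real.exp (n + 1) := by
        rw [mul_pow, Real.sq_sqrt (by positivity), Real.sq_sqrt (by positivity), ← Real.exp_nat_mul]
        push_cast
        ring_nf
    _ ≤ Real.exp 1 * √(n + 1) * (n + 1) ^ n := factorial_mul_exp_succ_le n
    _ ≤ (2 * (n + 1)) ^ 2 * (n + 1) ^ n := by
        gcongr
        nlinarith [Real.exp_one_lt_d9, Real.exp_pos 1]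
    _ = (2 * (n + 1) * √(n + 1) ^ n) ^ 2 := by
        rw [mul_pow _ (√_ ^ n), ← pow_mul, mul_comm n 2, pow_mul, Real.sq_sqrt (by positivity)]

end OneDimensional

section MultiIndex

variable {d : ℕ}

lemma sub_single_add_single {γ : Fin d → ℕ} {i : Fin d} (hi : γ i ≠ 0) :
    γ - Pi.single i 1 + Pi.single i 1 = γ := by
  refine tsub_add_cancel_of_le fun j => ?_
  obtain rfl | hj := eq_or_ne j i
  · simpa [Nat.one_le_iff_ne_zero] using hi
  · simp [hj]

lemma multiIndex_induction {p : (Fin d → ℕ) → Prop} (zero : p 0)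
    (add_single : ∀ γ i, p γ → p (γ + Pi.single i 1)) (γ : Fin d → ℕ) : p γ := by
  induction hn : ∑ i, γ i generalizing γ with
  | zero =>
    have hγ : γ = 0 := funext fun i => Finset.sum_eq_zero_iff.1 hn i (Finset.mem_univ i)
    exact hγ ▸ zero
  | succ n ih =>
    obtain ⟨i, -, hi⟩ : ∃ i ∈ Finset.univ, γ i ≠ 0 :=
      Finset.exists_ne_zero_of_sum_ne_zero (hn ▸ n.succ_ne_zero)
    obtain ⟨γ', rfl⟩ : ∃ γ', γ = γ' + Pi.single i 1 :=
      ⟨γ - Pi.single i 1, (sub_single_add_single hi).symm⟩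
    refine add_single γ' i (ih γ' ?_)
    simpa [Finset.sum_add_distrib] using hn

/-- The weight `2|γ| + d` of a multi-index, the eigenvalue of twice the harmonic oscillator
`-Δ + |x|² / 4` at the Hermite function `h_γ`. -/
def weight (γ : Fin d → ℕ) : ℕ := 2 * ∑ i, γ i + d

lemma weight_add_single (γ : Fin d → ℕ) (i : Fin d) :
    weight (γ + Pi.single i 1) = weight γ + 2 := by
  simp only [weight, Pi.add_apply, Finset.sum_add_distrib, Finset.sum_pi_single', Finset.mem_univ,
    if_true]
  ring

lemma weight_sub_single_le (γ : Fin d → ℕ) (i : Fin d) :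
    weight (γ - Pi.single i 1) ≤ weight γ := by
  unfold weight
  gcongr with j
  exact Nat.sub_le _ _

lemma lt_weight (γ : Fin d → ℕ) (i : Fin d) : γ i < weight γ := by
  have hle : γ i ≤ ∑ j, γ j := Finset.single_le_sum_of_canonicallyOrdered (Finset.mem_univ i)
  have hd : 0 < d := i.pos
  unfold weight
  lia

lemma weight_pos (hd : 0 < d) (γ : Fin d → ℕ) : 0 < weight γ :=
  (Nat.zero_le _).trans_lt (lt_weight γ ⟨0, hd⟩)

lemma sqrt_add_one_le_weight (γ : Fin d → ℕ) (i : Fin d) : √(γ i + 1) ≤ weight γ := by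
  have hlt : (γ i : ℝ) + 1 ≤ weight γ := mod_cast lt_weight γ i
  exact Real.sqrt_le_iff.2 ⟨by positivity, by nlinarith⟩

lemma summable_prod_of_nonneg {ι κ : Type*} [Fintype ι] {f : ι → κ → ℝ} (hf : ∀ i k, 0 ≤ f i k)
    (hsum : ∀ i, Summable (f i)) : Summable fun γ : ι → κ => ∏ i, f i (γ i) := by
  classical
  refine summable_of_sum_le (c := ∏ i, ∑' k, f i k)
    (fun γ => Finset.prod_nonneg fun i _ => hf i _) fun u => ?_
  calc ∑ γ ∈ u, ∏ i, f i (γ i)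
      ≤ ∑ γ ∈ Fintype.piFinset fun i => u.image (· i), ∏ i, f i (γ i) :=
        Finset.sum_le_sum_of_subset_of_nonneg
          (fun γ hγ => Fintype.mem_piFinset.2 fun i => Finset.mem_image_of_mem _ hγ)
          fun γ _ _ => Finset.prod_nonneg fun i _ => hf i _
    _ = ∏ i, ∑ k ∈ u.image (· i), f i k := (Finset.prod_univ_sum ..).symm
    _ ≤ ∏ i, ∑' k, f i k :=
        Finset.prod_le_prod (fun i _ => Finset.sum_nonneg fun k _ => hf i k)
          fun i _ => (hsum i).sum_le_tsum _ fun k _ => hf i k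

lemma summable_inv_weight_pow : Summable fun γ : Fin d → ℕ => ((weight γ : ℝ) ^ (2 * d))⁻¹ := by
  have hsq : Summable fun n : ℕ => (((n : ℝ) + 1) ^ 2)⁻¹ := by
    simpa using (summable_nat_add_iff 1).2 (Real.summable_nat_pow_inv.2 (one_lt_two (α := ℕ)))
  refine Summable.of_nonneg_of_le (fun γ => by positivity) (fun γ => ?_)
    (summable_prod_of_nonneg (fun (_ : Fin d) n => by positivity) fun _ => hsq)
  rw [Finset.prod_inv_distrib]
  gcongr
  calc ∏ i, ((γ i : ℝ) + 1) ^ 2 ≤ ∏ _i : Fin d, (weight γ : ℝ) ^ 2 := by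
        gcongr with i
        exact_mod_cast lt_weight γ i
    _ = (weight γ : ℝ) ^ (2 * d) := by rw [Fin.prod_const, pow_mul]

end MultiIndex

section PolynomialGrowth

variable {d : ℕ} {a b : (Fin d → ℕ) → ℝ}

/-- Polynomial growth of a family indexed by multi-indices, measured by the weight `2|γ| + d`. -/
def HasPolynomialGrowth (a : (Fin d → ℕ) → ℝ) : Prop :=
  ∃ m : ℕ, a =O[⊤] fun γ => ((weight γ : ℝ) + 1) ^ m

lemma hasPolynomialGrowth_const (c : ℝ) : HasPolynomialGrowth fun _ : Fin d → ℕ => c :=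
  ⟨0, by simpa using isBigO_const_const c (one_ne_zero (α := ℝ)) ⊤⟩

namespace HasPolynomialGrowth

lemma of_abs_le_weight (ha : ∀ γ, |a γ| ≤ weight γ) : HasPolynomialGrowth a := by
  refine ⟨1, .of_bound' <| .of_forall fun γ => ?_⟩
  rw [Real.norm_eq_abs, pow_one, Real.norm_of_nonneg (by positivity)]
  linarith [ha γ]

lemma of_abs_le (hb : HasPolynomialGrowth b) (hab : ∀ γ, |a γ| ≤ |b γ|) :
    HasPolynomialGrowth a :=
  hb.imp fun _ hm => (IsBigO.of_bound' (.of_forall hab)).trans hm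

lemma add (ha : HasPolynomialGrowth a) (hb : HasPolynomialGrowth b) :
    HasPolynomialGrowth fun γ => a γ + b γ := by
  obtain ⟨m, hm⟩ := ha
  obtain ⟨n, hn⟩ := hb
  have hpow {k l : ℕ} (hkl : k ≤ l) :
      (fun γ : Fin d → ℕ => ((weight γ : ℝ) + 1) ^ k) =O[⊤] fun γ => ((weight γ : ℝ) + 1) ^ l := by
    refine .of_bound' <| .of_forall fun γ => ?_
    rw [Real.norm_of_nonneg (by positivity), Real.norm_of_nonneg (by positivity)]
    exact pow_le_pow_right₀ (by simp) hkl
  exact ⟨m + n, (hm.trans (hpow (m.le_add_right n))).add (hn.trans (hpow (n.le_add_left m)))⟩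

lemma sum {ι : Type*} {s : Finset ι} {a : ι → (Fin d → ℕ) → ℝ}
    (ha : ∀ i ∈ s, HasPolynomialGrowth (a i)) : HasPolynomialGrowth fun γ => ∑ i ∈ s, a i γ := by
  simpa only [Finset.sum_fn] using
    Finset.sum_induction a HasPolynomialGrowth (fun _ _ => add) (hasPolynomialGrowth_const 0) ha

lemma mul (ha : HasPolynomialGrowth a) (hb : HasPolynomialGrowth b) :
    HasPolynomialGrowth fun γ => a γ * b γ := by
  obtain ⟨m, hm⟩ := ha
  obtain ⟨n, hn⟩ := hb
  exact ⟨m + n, by simpa only [pow_add] using hm.mul hn⟩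

lemma const_mul (c : ℝ) (ha : HasPolynomialGrowth a) : HasPolynomialGrowth fun γ => c * a γ :=
  (hasPolynomialGrowth_const c).mul ha

lemma prod {ι : Type*} {s : Finset ι} {a : ι → (Fin d → ℕ) → ℝ}
    (ha : ∀ i ∈ s, HasPolynomialGrowth (a i)) : HasPolynomialGrowth fun γ => ∏ i ∈ s, a i γ := by
  simpa only [Finset.prod_fn] using
    Finset.prod_induction a HasPolynomialGrowth (fun _ _ => mul) (hasPolynomialGrowth_const 1) ha

lemma comp {σ : (Fin d → ℕ) → Fin d → ℕ} (ha : HasPolynomialGrowth a)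
    (hσ : ∀ γ, weight (σ γ) ≤ weight γ + 2) : HasPolynomialGrowth fun γ => a (σ γ) := by
  obtain ⟨m, hm⟩ := ha
  refine ⟨m, (hm.comp_tendsto le_top).trans <| .of_bound (3 ^ m) <| .of_forall fun γ => ?_⟩
  have hle : (weight (σ γ) : ℝ) ≤ weight γ + 2 := mod_cast hσ γ
  rw [Function.comp_apply, Real.norm_of_nonneg (by positivity),
    Real.norm_of_nonneg (by positivity), ← mul_pow]
  gcongr
  linarith [(weight γ).cast_nonneg (α := ℝ)]

lemma of_abs_le_ladder (ha : HasPolynomialGrowth a) {i : Fin d}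
    (hb : ∀ γ, |b γ| ≤
      √(γ i) * |a (γ - Pi.single i 1)| + √(γ i + 1) * |a (γ + Pi.single i 1)|) :
    HasPolynomialGrowth b := by
  have habs : HasPolynomialGrowth fun γ => |a γ| := ha.of_abs_le fun γ => (abs_abs _).le
  have hsqrt : HasPolynomialGrowth fun γ : Fin d → ℕ => √(γ i) :=
    of_abs_le_weight fun γ => by
      rw [abs_of_nonneg (Real.sqrt_nonneg _)]
      exact (Real.sqrt_le_sqrt (by linarith)).trans (sqrt_add_one_le_weight γ i)
  have hsqrt_succ : HasPolynomialGrowth fun γ : Fin d → ℕ => √(γ i + 1) :=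
    of_abs_le_weight fun γ => by
      rw [abs_of_nonneg (Real.sqrt_nonneg _)]
      exact sqrt_add_one_le_weight γ i
  have hsub := habs.comp fun γ => (weight_sub_single_le γ i).trans (Nat.le_add_right _ 2)
  have hadd := habs.comp fun γ => (weight_add_single γ i).le
  exact ((hsqrt.mul hsub).add (hsqrt_succ.mul hadd)).of_abs_le fun γ =>
    (hb γ).trans (le_abs_self _)

lemma exists_summable_inv_weight_pow_mul_sq (ha : HasPolynomialGrowth a) :
    ∃ q : ℕ, (∀ γ : Fin d → ℕ, (weight γ : ℝ) ^ q ≠ 0) ∧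
      Summable fun γ => ((weight γ : ℝ) ^ (2 * q))⁻¹ * a γ ^ 2 := by
  rcases d.eq_zero_or_pos with rfl | hd
  · exact ⟨0, by simp, Summable.of_finite⟩
  obtain ⟨m, hm⟩ := ha
  obtain ⟨C, hC₀, hC⟩ := hm.exists_nonneg
  have hw (γ : Fin d → ℕ) : (1 : ℝ) ≤ weight γ := mod_cast weight_pos hd γ
  refine ⟨m + d, fun γ => pow_ne_zero _ (by linarith [hw γ]), Summable.of_nonneg_of_le
    (fun γ => by positivity) (fun γ => ?_) (summable_inv_weight_pow.mul_left ((C * 2 ^ m) ^ 2))⟩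
  have hγ : |a γ| ≤ C * 2 ^ m * weight γ ^ m := by
    have hbound := eventually_top.1 hC.bound γ
    rw [Real.norm_eq_abs, Real.norm_of_nonneg (by positivity)] at hbound
    rw [mul_assoc, ← mul_pow]
    refine hbound.trans ?_
    gcongr
    linarith [hw γ]
  calc ((weight γ : ℝ) ^ (2 * (m + d)))⁻¹ * a γ ^ 2
      ≤ ((weight γ : ℝ) ^ (2 * (m + d)))⁻¹ * (C * 2 ^ m * weight γ ^ m) ^ 2 := by
        gcongr ?_ * ?_
        exact sq_le_sq.2 (hγ.trans (le_abs_self _))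
    _ = (C * 2 ^ m) ^ 2 * ((weight γ : ℝ) ^ (2 * d))⁻¹ := by
        have := (zero_lt_one.trans_le (hw γ)).ne'
        field_simp
        ring

end HasPolynomialGrowth

end PolynomialGrowth

section Ladder

variable {d : ℕ}

lemma hermiteFunMulti_eq_mul_prod_erase {γ δ : Fin d → ℕ} (i : Fin d) (hδ : ∀ j ≠ i, δ j = γ j)
    (x : EuclideanSpace ℝ (Fin d)) :
    hermiteFunMulti d δ x =
      hermiteFun (δ i) (x i) * ∏ j ∈ Finset.univ.erase i, hermiteFun (γ j) (x j) := by
  rw [hermiteFunMulti, ← Finset.mul_prod_erase _ _ (Finset.mem_univ i)]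
  congr 1
  exact Finset.prod_congr rfl fun j hj => by rw [hδ j (Finset.ne_of_mem_erase hj)]

lemma hermiteFunMulti_add_single (γ : Fin d → ℕ) (i : Fin d) (x : EuclideanSpace ℝ (Fin d)) :
    hermiteFunMulti d (γ + Pi.single i 1) x =
      hermiteFun (γ i + 1) (x i) * ∏ j ∈ Finset.univ.erase i, hermiteFun (γ j) (x j) := by
  rw [hermiteFunMulti_eq_mul_prod_erase (γ := γ) i fun j hj => by simp [hj], Pi.add_apply,
    Pi.single_eq_same]

lemma hermiteFunMulti_sub_single (γ : Fin d → ℕ) (i : Fin d) (x : EuclideanSpace ℝ (Fin d)) :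
    hermiteFunMulti d (γ - Pi.single i 1) x =
      hermiteFun (γ i - 1) (x i) * ∏ j ∈ Finset.univ.erase i, hermiteFun (γ j) (x j) := by
  rw [hermiteFunMulti_eq_mul_prod_erase (γ := γ) i fun j hj => by simp [hj], Pi.sub_apply,
    Pi.single_eq_same]

lemma mul_hermiteFunMulti (γ : Fin d → ℕ) (i : Fin d) (x : EuclideanSpace ℝ (Fin d)) :
    x i * hermiteFunMulti d γ x =
      √(γ i) * hermiteFunMulti d (γ - Pi.single i 1) x +
        √(γ i + 1) * hermiteFunMulti d (γ + Pi.single i 1) x := by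
  rw [hermiteFunMulti_sub_single, hermiteFunMulti_add_single,
    hermiteFunMulti_eq_mul_prod_erase i fun _ _ => rfl]
  linear_combination
    (∏ j ∈ Finset.univ.erase i, hermiteFun (γ j) (x j)) * mul_hermiteFun (γ i) (x i)

lemma hasLineDerivAt_hermiteFunMulti (γ : Fin d → ℕ) (i : Fin d)
    (x : EuclideanSpace ℝ (Fin d)) :
    HasLineDerivAt ℝ (hermiteFunMulti d γ)
      (√(γ i) / 2 * hermiteFunMulti d (γ - Pi.single i 1) x -
        √(γ i + 1) / 2 * hermiteFunMulti d (γ + Pi.single i 1) x)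
      x (EuclideanSpace.single i 1) := by
  have hline (t : ℝ) : hermiteFunMulti d γ (x + t • EuclideanSpace.single i 1) =
      hermiteFun (γ i) (x i + t) * ∏ j ∈ Finset.univ.erase i, hermiteFun (γ j) (x j) := by
    rw [hermiteFunMulti_eq_mul_prod_erase i fun _ _ => rfl]
    congr 1
    · simp
    · exact Finset.prod_congr rfl fun j hj => by simp [Finset.ne_of_mem_erase hj]
  have hderiv := ((hasDerivAt_hermiteFun (γ i) (x i + 0)).comp_const_add (x i) 0).mul_const
    (∏ j ∈ Finset.univ.erase i, hermiteFun (γ j) (x j))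
  rw [HasLineDerivAt, funext hline]
  refine hderiv.congr_deriv ?_
  rw [hermiteFunMulti_sub_single, hermiteFunMulti_add_single, add_zero]
  linear_combination
    (∏ j ∈ Finset.univ.erase i, hermiteFun (γ j) (x j)) / 2 * mul_hermiteFun (γ i) (x i)

/-- Multiplication of Schwartz functions by the `i`-th coordinate. -/
noncomputable def coordMul (i : Fin d) :
    𝓢(EuclideanSpace ℝ (Fin d), ℝ) →L[ℝ] 𝓢(EuclideanSpace ℝ (Fin d), ℝ) :=
  SchwartzMap.smulLeftCLM ℝ fun x : EuclideanSpace ℝ (Fin d) => x i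

lemma coordMul_apply (i : Fin d) (f : 𝓢(EuclideanSpace ℝ (Fin d), ℝ))
    (x : EuclideanSpace ℝ (Fin d)) : coordMul i f x = x i * f x :=
  SchwartzMap.smulLeftCLM_apply_apply (EuclideanSpace.proj (𝕜 := ℝ) i).hasTemperateGrowth f x

/-- The creation operator `a_i† = x_i / 2 - ∂_i`, which raises the `i`-th index of a Hermite
function. -/
noncomputable def creation (i : Fin d) :
    𝓢(EuclideanSpace ℝ (Fin d), ℝ) →L[ℝ] 𝓢(EuclideanSpace ℝ (Fin d), ℝ) :=
  (1 / 2 : ℝ) • coordMul i - LineDeriv.lineDerivOpCLM ℝ _ (EuclideanSpace.single i (1 : ℝ))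

lemma creation_apply (i : Fin d) (f : 𝓢(EuclideanSpace ℝ (Fin d), ℝ)) :
    creation i f = (1 / 2 : ℝ) • coordMul i f - ∂_{EuclideanSpace.single i (1 : ℝ)} f :=
  rfl

/-- The annihilation operator `a_i = x_i / 2 + ∂_i`, the formal adjoint of `creation i`, which
lowers the `i`-th index of a Hermite function. -/
noncomputable def annihilation (i : Fin d) :
    𝓢(EuclideanSpace ℝ (Fin d), ℝ) →L[ℝ] 𝓢(EuclideanSpace ℝ (Fin d), ℝ) :=
  (1 / 2 : ℝ) • coordMul i + LineDeriv.lineDerivOpCLM ℝ _ (EuclideanSpace.single i (1 : ℝ))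

lemma annihilation_apply (i : Fin d) (f : 𝓢(EuclideanSpace ℝ (Fin d), ℝ)) :
    annihilation i f = (1 / 2 : ℝ) • coordMul i f + ∂_{EuclideanSpace.single i (1 : ℝ)} f :=
  rfl

/-- A family of Schwartz functions `h` whose values are those of the Hermite functions `h_γ`. -/
def IsHermiteFamily (h : (Fin d → ℕ) → 𝓢(EuclideanSpace ℝ (Fin d), ℝ)) : Prop :=
  ∀ γ x, h γ x = hermiteFunMulti d γ x

namespace IsHermiteFamily

variable {h : (Fin d → ℕ) → 𝓢(EuclideanSpace ℝ (Fin d), ℝ)}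

lemma coordMul_eq (hh : IsHermiteFamily h) (γ : Fin d → ℕ) (i : Fin d) :
    coordMul i (h γ) =
      √(γ i) • h (γ - Pi.single i 1) + √(γ i + 1) • h (γ + Pi.single i 1) := by
  ext x
  simpa [coordMul_apply, hh _ x] using mul_hermiteFunMulti γ i x

lemma lineDerivOp_eq (hh : IsHermiteFamily h) (γ : Fin d → ℕ) (i : Fin d) :
    ∂_{EuclideanSpace.single i (1 : ℝ)} (h γ) =
      (√(γ i) / 2) • h (γ - Pi.single i 1) - (√(γ i + 1) / 2) • h (γ + Pi.single i 1) := by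
  ext x
  rw [SchwartzMap.lineDerivOp_apply, funext (hh γ),
    (hasLineDerivAt_hermiteFunMulti γ i x).lineDeriv]
  simp [hh _ x]

lemma creation_eq (hh : IsHermiteFamily h) (γ : Fin d → ℕ) (i : Fin d) :
    creation i (h γ) = √(γ i + 1) • h (γ + Pi.single i 1) := by
  rw [creation_apply, hh.coordMul_eq, hh.lineDerivOp_eq]
  module

lemma annihilation_eq (hh : IsHermiteFamily h) (γ : Fin d → ℕ) (i : Fin d) :
    annihilation i (h γ) = √(γ i) • h (γ - Pi.single i 1) := by
  rw [annihilation_apply, hh.coordMul_eq, hh.lineDerivOp_eq]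
  module

lemma creation_annihilation_eq (hh : IsHermiteFamily h) (γ : Fin d → ℕ) (i : Fin d) :
    creation i (annihilation i (h γ)) = (γ i : ℝ) • h γ := by
  rw [hh.annihilation_eq, map_smul, hh.creation_eq, smul_smul]
  obtain hi | hi := Nat.eq_zero_or_pos (γ i)
  · simp [hi]
  have hcast : ((γ - Pi.single i 1 : Fin d → ℕ) i : ℝ) + 1 = γ i := by
    rw [Pi.sub_apply, Pi.single_eq_same]
    exact_mod_cast Nat.sub_add_cancel hi
  rw [hcast, Real.mul_self_sqrt (Nat.cast_nonneg _),
    sub_single_add_single hi.ne']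

end IsHermiteFamily

end Ladder

section Seminorms

lemma exists_seminorm_succ_le_sum_lineDerivOp {ι E F : Type*} [Fintype ι] [NormedAddCommGroup E]
    [NormedSpace ℝ E] [FiniteDimensional ℝ E] [NormedAddCommGroup F] [NormedSpace ℝ F]
    (b : Module.Basis ι ℝ E) (k n : ℕ) :
    ∃ K : ℝ, ∀ f : 𝓢(E, F), SchwartzMap.seminorm ℝ k (n + 1) f ≤
      K * ∑ i, SchwartzMap.seminorm ℝ k n (∂_{b i} f) := by
  let L (i : ι) : F →L[ℝ] E →L[ℝ] F :=
    ContinuousLinearMap.smulRightL ℝ E F (LinearMap.toContinuousLinearMap (b.coord i))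
  refine ⟨∑ i, ‖L i‖, fun f => SchwartzMap.seminorm_le_bound ℝ k (n + 1) f (by positivity)
    fun x => ?_⟩
  set D : ι → 𝓢(E, F) := fun i => ∂_{b i} f with hD
  have hfderiv : fderiv ℝ f = fun x => ∑ i, L i (D i x) := by
    ext x v
    simpa [L, hD, SchwartzMap.lineDerivOp_apply_eq_fderiv, -Module.Basis.sum_repr]
      using congrArg (fderiv ℝ f x) (b.sum_repr v).symm
  have hsmooth (i : ι) : ContDiff ℝ n fun x => L i (D i x) :=
    (L i).contDiff.comp ((D i).smooth n)
  calc ‖x‖ ^ k * ‖iteratedFDeriv ℝ (n + 1) f x‖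
      ≤ ‖x‖ ^ k * ∑ i, ‖L i‖ * ‖iteratedFDeriv ℝ n (D i) x‖ := by
        rw [← norm_iteratedFDeriv_fderiv, hfderiv,
          iteratedFDeriv_fun_sum_apply fun i _ => (hsmooth i).contDiffAt]
        gcongr
        exact norm_sum_le_of_le _ fun i _ =>
          (L i).norm_iteratedFDeriv_comp_left ((D i).smooth n).contDiffAt le_rfl
    _ = ∑ i, ‖L i‖ * (‖x‖ ^ k * ‖iteratedFDeriv ℝ n (D i) x‖) := by
        rw [Finset.mul_sum]
        exact Finset.sum_congr rfl fun i _ => mul_left_comm ..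
    _ ≤ ∑ i, ‖L i‖ * ∑ j, SchwartzMap.seminorm ℝ k n (D j) := by
        gcongr with i
        exact (SchwartzMap.le_seminorm ℝ k n _ x).trans <| Finset.single_le_sum
          (f := fun j => SchwartzMap.seminorm ℝ k n (D j))
          (fun j _ => apply_nonneg _ _) (Finset.mem_univ i)
    _ = (∑ i, ‖L i‖) * ∑ j, SchwartzMap.seminorm ℝ k n (D j) := by rw [Finset.sum_mul]

variable {d : ℕ}

lemma seminorm_succ_zero_le_sum_coordMul (k : ℕ) (f : 𝓢(EuclideanSpace ℝ (Fin d), ℝ)) :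
    SchwartzMap.seminorm ℝ (k + 1) 0 f ≤ ∑ i, SchwartzMap.seminorm ℝ k 0 (coordMul i f) := by
  refine SchwartzMap.seminorm_le_bound ℝ _ 0 f (by positivity) fun x => ?_
  have hx : ‖x‖ ≤ ∑ i, |x i| := by
    conv_lhs => rw [← (EuclideanSpace.basisFun (Fin d) ℝ).sum_repr x]
    exact norm_sum_le_of_le _ fun i _ => by simp [norm_smul]
  rw [norm_iteratedFDeriv_zero]
  calc ‖x‖ ^ (k + 1) * ‖f x‖ ≤ ‖x‖ ^ k * (∑ i, |x i|) * ‖f x‖ := by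
        rw [pow_succ]
        gcongr
    _ = ∑ i, ‖x‖ ^ k * ‖coordMul i f x‖ := by
        rw [Finset.mul_sum, Finset.sum_mul]
        simp [coordMul_apply, mul_assoc]
    _ ≤ ∑ i, SchwartzMap.seminorm ℝ k 0 (coordMul i f) := by
        gcongr with i
        exact SchwartzMap.norm_pow_mul_le_seminorm ℝ _ k x

namespace IsHermiteFamily

variable {h : (Fin d → ℕ) → 𝓢(EuclideanSpace ℝ (Fin d), ℝ)}

lemma hasPolynomialGrowth_coordMul (hh : IsHermiteFamily h)
    {p : Seminorm ℝ 𝓢(EuclideanSpace ℝ (Fin d), ℝ)} (hp : HasPolynomialGrowth fun γ => p (h γ))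
    (i : Fin d) : HasPolynomialGrowth fun γ => p (coordMul i (h γ)) := by
  refine hp.of_abs_le_ladder (i := i) fun γ => ?_
  simp only [abs_of_nonneg (apply_nonneg p _)]
  rw [hh.coordMul_eq]
  refine (map_add_le_add p _ _).trans_eq ?_
  simp only [map_smul_eq_mul, Real.norm_of_nonneg (Real.sqrt_nonneg _)]

lemma hasPolynomialGrowth_lineDerivOp (hh : IsHermiteFamily h)
    {p : Seminorm ℝ 𝓢(EuclideanSpace ℝ (Fin d), ℝ)} (hp : HasPolynomialGrowth fun γ => p (h γ))
    (i : Fin d) :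
    HasPolynomialGrowth fun γ => p (∂_{EuclideanSpace.single i (1 : ℝ)} (h γ)) := by
  refine hp.of_abs_le_ladder (i := i) fun γ => ?_
  simp only [abs_of_nonneg (apply_nonneg p _)]
  rw [hh.lineDerivOp_eq]
  refine (map_sub_le_add p _ _).trans ?_
  rw [map_smul_eq_mul, map_smul_eq_mul, Real.norm_of_nonneg (by positivity),
    Real.norm_of_nonneg (by positivity)]
  gcongr <;> exact half_le_self (Real.sqrt_nonneg _)

lemma hasPolynomialGrowth_seminorm_zero_zero (hh : IsHermiteFamily h) :
    HasPolynomialGrowth fun γ => SchwartzMap.seminorm ℝ 0 0 (h γ) := by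
  have hlin (i : Fin d) : HasPolynomialGrowth fun γ : Fin d → ℕ => (γ i : ℝ) + 1 :=
    .of_abs_le_weight fun γ => by
      rw [abs_of_nonneg (by positivity)]
      exact mod_cast lt_weight γ i
  have hprod : HasPolynomialGrowth fun γ : Fin d → ℕ => ∏ i, 2 * ((γ i : ℝ) + 1) :=
    .prod fun i _ => (hlin i).const_mul 2
  refine hprod.of_abs_le fun γ => ?_
  rw [abs_of_nonneg (apply_nonneg _ _)]
  refine (SchwartzMap.seminorm_le_bound ℝ 0 0 _ (by positivity) fun x => ?_).trans (le_abs_self _)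
  rw [pow_zero, one_mul, norm_iteratedFDeriv_zero, hh, hermiteFunMulti, norm_prod]
  gcongr with i
  exact abs_hermiteFun_le _ _

lemma hasPolynomialGrowth_seminorm (hh : IsHermiteFamily h) (k n : ℕ) :
    HasPolynomialGrowth fun γ => SchwartzMap.seminorm ℝ k n (h γ) := by
  induction n with
  | zero =>
    induction k with
    | zero => exact hh.hasPolynomialGrowth_seminorm_zero_zero
    | succ k ih =>
      have hsum : HasPolynomialGrowth fun γ =>
          ∑ i, SchwartzMap.seminorm ℝ k 0 (coordMul i (h γ)) :=
        .sum fun i _ => hh.hasPolynomialGrowth_coordMul ih i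
      refine hsum.of_abs_le fun γ => ?_
      rw [abs_of_nonneg (apply_nonneg _ _)]
      exact (seminorm_succ_zero_le_sum_coordMul k _).trans (le_abs_self _)
  | succ n ih =>
    obtain ⟨K, hK⟩ := exists_seminorm_succ_le_sum_lineDerivOp (F := ℝ)
      (EuclideanSpace.basisFun (Fin d) ℝ).toBasis k n
    have hsum : HasPolynomialGrowth fun γ => ∑ i,
        SchwartzMap.seminorm ℝ k n (∂_{EuclideanSpace.single i (1 : ℝ)} (h γ)) :=
      .sum fun i _ => hh.hasPolynomialGrowth_lineDerivOp ih i
    refine (hsum.const_mul K).of_abs_le fun γ => ?_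
    rw [abs_of_nonneg (apply_nonneg _ _)]
    simpa using (hK (h γ)).trans (le_abs_self _)

lemma hasPolynomialGrowth_apply (hh : IsHermiteFamily h)
    (T : 𝓢(EuclideanSpace ℝ (Fin d), ℝ) →L[ℝ] ℝ) : HasPolynomialGrowth fun γ => T (h γ) := by
  obtain ⟨s, C, -, hC⟩ := Seminorm.bound_of_continuous
    (schwartz_withSeminorms ℝ (EuclideanSpace ℝ (Fin d)) ℝ)
    ((normSeminorm ℝ ℝ).comp T.toLinearMap) (continuous_norm.comp T.continuous)
  have hsum : HasPolynomialGrowth fun γ =>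
      ∑ p ∈ s, schwartzSeminormFamily ℝ (EuclideanSpace ℝ (Fin d)) ℝ p (h γ) :=
    .sum fun p _ => hh.hasPolynomialGrowth_seminorm p.1 p.2
  refine (hsum.const_mul C).of_abs_le fun γ => ?_
  refine (hC (h γ)).trans (le_trans ?_ (le_abs_self _))
  rw [smul_apply, NNReal.smul_def, smul_eq_mul]
  gcongr
  exact Seminorm.finset_sup_apply_le (Finset.sum_nonneg fun p _ => apply_nonneg _ _) fun p hp =>
    Finset.single_le_sum (f := fun p => schwartzSeminormFamily ℝ _ ℝ p (h γ))
      (fun p _ => apply_nonneg _ _) hp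

end IsHermiteFamily

end Seminorms

section Coefficients

variable {d : ℕ}

lemma integrable_mul (f g : 𝓢(EuclideanSpace ℝ (Fin d), ℝ)) :
    Integrable fun x => f x * g x :=
  (SchwartzMap.pairing (ContinuousLinearMap.mul ℝ ℝ) f g).integrable

lemma inner_toLp_toLp (f g : 𝓢(EuclideanSpace ℝ (Fin d), ℝ)) :
    inner ℝ (f.toLp 2) (g.toLp 2) = ∫ x, f x * g x := by
  rw [L2.inner_def]
  refine integral_congr_ae ?_
  filter_upwards [f.coeFn_toLp 2, g.coeFn_toLp 2] with x hf hg
  simp [hf, hg, mul_comm]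

lemma integral_creation_mul (i : Fin d) (f g : 𝓢(EuclideanSpace ℝ (Fin d), ℝ)) :
    ∫ x, creation i f x * g x = ∫ x, f x * annihilation i g x := by
  have hibp := SchwartzMap.integral_mul_lineDerivOp_right_eq_neg_left f g
    (EuclideanSpace.single i (1 : ℝ)) (μ := volume)
  have hleft (x : EuclideanSpace ℝ (Fin d)) : creation i f x * g x =
      (1 / 2 : ℝ) * (coordMul i f x * g x) - (∂_{EuclideanSpace.single i (1 : ℝ)} f) x * g x := by
    simp only [creation_apply, sub_apply, smul_apply, smul_eq_mul]
    ring
  have hright (x : EuclideanSpace ℝ (Fin d)) : f x * annihilation i g x =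
      (1 / 2 : ℝ) * (coordMul i f x * g x) + f x * (∂_{EuclideanSpace.single i (1 : ℝ)} g) x := by
    simp only [annihilation_apply, add_apply, smul_apply, coordMul_apply, smul_eq_mul]
    ring
  have hcoord := (integrable_mul (coordMul i f) g).const_mul (1 / 2)
  simp only [hleft, hright]
  rw [integral_sub hcoord (integrable_mul _ _), integral_add hcoord (integrable_mul _ _), hibp,
    sub_eq_add_neg]

lemma hermiteFunMulti_zero (x : EuclideanSpace ℝ (Fin d)) :
    hermiteFunMulti d 0 x = (√√(2 * Real.pi))⁻¹ ^ d * Real.exp (-(1 / 4) * ‖x‖ ^ 2) := by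
  have hone (t : ℝ) :
      hermiteFun 0 t = (√√(2 * Real.pi))⁻¹ * Real.exp (-(1 / 4) * t ^ 2) := by
    rw [hermiteFun, hermitePoly_eq_aeval]
    simp [div_eq_inv_mul]
  simp only [hermiteFunMulti, Pi.zero_apply, hone, Finset.prod_mul_distrib, ← Real.exp_sum,
    ← Finset.mul_sum, EuclideanSpace.norm_sq_eq, Real.norm_eq_abs, sq_abs, Fin.prod_const]

lemma hermCoeff_zero_zero : hermCoeff d (hermiteFunMulti d 0) 0 = 1 := by
  have hpi : 0 < 2 * Real.pi := by positivity
  have hsq (x : EuclideanSpace ℝ (Fin d)) : hermiteFunMulti d 0 x * hermiteFunMulti d 0 x =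
      (√(2 * Real.pi))⁻¹ ^ d * Real.exp (-(1 / 2) * ‖x‖ ^ 2) := by
    rw [hermiteFunMulti_zero, mul_mul_mul_comm, ← mul_pow, ← mul_inv,
      Real.mul_self_sqrt (by positivity), ← Real.exp_add]
    ring_nf
  simp only [hermCoeff, hsq]
  rw [integral_const_mul, GaussianFourier.integral_rexp_neg_mul_sq_norm (by norm_num),
    finrank_euclideanSpace_fin, div_div_eq_mul_div, div_one, mul_comm Real.pi, Real.sqrt_eq_rpow,
    inv_pow, ← Real.rpow_mul_natCast hpi.le, one_div_mul_eq_div]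
  exact inv_mul_cancel₀ (Real.rpow_pos_of_pos hpi _).ne'

namespace IsHermiteFamily

variable {h : (Fin d → ℕ) → 𝓢(EuclideanSpace ℝ (Fin d), ℝ)}

lemma hermCoeff_eq_integral (hh : IsHermiteFamily h) (f : 𝓢(EuclideanSpace ℝ (Fin d), ℝ))
    (γ : Fin d → ℕ) : hermCoeff d f γ = ∫ x, f x * h γ x := by
  simp only [hermCoeff, hh γ _]

lemma hermCoeff_eq_inner (hh : IsHermiteFamily h) (f : 𝓢(EuclideanSpace ℝ (Fin d), ℝ))
    (γ : Fin d → ℕ) : hermCoeff d f γ = inner ℝ (f.toLp 2) ((h γ).toLp 2) := by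
  rw [hh.hermCoeff_eq_integral, inner_toLp_toLp]

lemma hermCoeff_creation (hh : IsHermiteFamily h) (f : 𝓢(EuclideanSpace ℝ (Fin d), ℝ))
    (γ : Fin d → ℕ) (i : Fin d) :
    hermCoeff d (creation i f) γ = √(γ i) * hermCoeff d f (γ - Pi.single i 1) := by
  rw [hh.hermCoeff_eq_integral, hh.hermCoeff_eq_integral, integral_creation_mul,
    hh.annihilation_eq, ← integral_const_mul]
  simp [mul_left_comm]

lemma hermCoeff_self (hh : IsHermiteFamily h) (γ : Fin d → ℕ) : hermCoeff d (h γ) γ = 1 := by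
  induction γ using multiIndex_induction with
  | zero => rw [funext (hh 0), hermCoeff_zero_zero]
  | add_single γ i ih =>
    have hladder := hh.hermCoeff_creation (h γ) (γ + Pi.single i 1) i
    rw [hh.creation_eq, add_tsub_cancel_right, ih, Pi.add_apply, Pi.single_eq_same,
      Nat.cast_add_one, hh.hermCoeff_eq_integral] at hladder
    simp only [smul_apply, smul_eq_mul, mul_assoc, integral_const_mul] at hladder
    rw [hh.hermCoeff_eq_integral]
    exact mul_left_cancel₀ (by positivity) hladder

-- `a_i† a_i` is symmetric, and `h_γ`, `h_β` are eigenvectors of it with eigenvalues `γ_i ≠ β_i`.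
lemma hermCoeff_eq_zero (hh : IsHermiteFamily h) {γ β : Fin d → ℕ} (hγβ : γ ≠ β) :
    hermCoeff d (h γ) β = 0 := by
  obtain ⟨i, hi⟩ := Function.ne_iff.1 hγβ
  have hsymm : ∫ x, creation i (annihilation i (h γ)) x * h β x =
      ∫ x, h γ x * creation i (annihilation i (h β)) x := by
    rw [integral_creation_mul]
    simpa only [mul_comm] using (integral_creation_mul i (annihilation i (h β)) (h γ)).symm
  simp only [hh.creation_annihilation_eq, smul_apply, smul_eq_mul, mul_assoc,
    mul_left_comm (h γ _), integral_const_mul, ← hh.hermCoeff_eq_integral] at hsymm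
  have hne : (γ i : ℝ) - β i ≠ 0 := sub_ne_zero.2 (Nat.cast_injective.ne hi)
  exact (mul_eq_zero.1 (by linear_combination hsymm)).resolve_left hne

lemma orthonormal_toLp (hh : IsHermiteFamily h) :
    Orthonormal ℝ fun γ => (h γ).toLp 2 (volume : Measure (EuclideanSpace ℝ (Fin d))) := by
  classical
  rw [orthonormal_iff_ite]
  intro γ β
  rw [← hh.hermCoeff_eq_inner]
  split_ifs with hγβ
  · rw [← hγβ, hh.hermCoeff_self]
  · exact hh.hermCoeff_eq_zero hγβ

end IsHermiteFamily

end Coefficients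

section Completeness

open scoped FourierTransform

section Fourier

variable {V : Type*} [NormedAddCommGroup V] [InnerProductSpace ℝ V] [MeasurableSpace V]
  [BorelSpace V]

lemma ae_eq_zero_of_fourier_eq_zero [FiniteDimensional ℝ V] {f : V → ℂ} (hf : Integrable f)
    (hfourier : 𝓕 f = 0) : f =ᵐ[volume] 0 := by
  refine ae_eq_zero_of_integral_contDiff_smul_eq_zero hf.locallyIntegrable fun g hg hg_supp => ?_
  let φ : 𝓢(V, ℂ) := (hg_supp.comp_left Complex.ofReal_zero).toSchwartzMap
    (Complex.ofRealCLM.contDiff.comp hg)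
  have hflip := VectorFourier.integral_fourierIntegral_smul_eq_flip (L := innerₗ V)
    Real.continuous_fourierChar continuous_inner hf (𝓕⁻ φ).integrable (ν := volume)
  rw [flip_innerₗ] at hflip
  calc ∫ x, g x • f x = ∫ x, f x • 𝓕 (𝓕⁻ φ) x := by
        rw [FourierTransform.fourier_fourierInv_eq]
        exact integral_congr_ae <| .of_forall fun x => Complex.real_smul.trans (mul_comm _ _)
    _ = ∫ ξ, 𝓕 f ξ • 𝓕⁻ φ ξ := hflip.symm
    _ = 0 := by simp [hfourier]

lemma hasSum_integral_cexp_inner_mul {μ : Measure V} {g : V → ℝ}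
    (hg : AEStronglyMeasurable g μ) (w : V)
    (hexp : Integrable (fun x => Real.exp (‖w‖ * ‖x‖) * g x) μ) :
    HasSum (fun n : ℕ => ∫ x, (inner ℝ x w * Complex.I) ^ n / n.factorial * (g x : ℂ) ∂μ)
      (∫ x, Complex.exp (inner ℝ x w * Complex.I) * g x ∂μ) := by
  have hseries (z : ℂ) : HasSum (fun n : ℕ => z ^ n / n.factorial) (Complex.exp z) := by
    simpa only [Complex.exp_eq_exp_ℂ] using NormedSpace.expSeries_div_hasSum_exp (𝔸 := ℂ) z
  have hseries_real (r : ℝ) : HasSum (fun n : ℕ => r ^ n / n.factorial) (Real.exp r) := by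
    simpa only [Real.exp_eq_exp_ℝ] using NormedSpace.expSeries_div_hasSum_exp (𝔸 := ℝ) r
  refine hasSum_integral_of_dominated_convergence
    (fun n x => (‖w‖ * ‖x‖) ^ n / n.factorial * |g x|) (fun n => ?_) (fun n => ?_)
    (.of_forall fun x => (hseries_real _).summable.mul_right _) ?_
    (.of_forall fun x => (hseries _).mul_right _)
  · have hcont : Continuous fun x : V => (inner ℝ x w * Complex.I : ℂ) ^ n / n.factorial := by
      fun_prop
    exact hcont.aestronglyMeasurable.mul
      (Complex.continuous_ofReal.comp_aestronglyMeasurable hg)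
  · refine .of_forall fun x => ?_
    simp only [norm_mul, norm_div, norm_pow, Complex.norm_real, Complex.norm_I, mul_one,
      Complex.norm_natCast, ← Real.norm_eq_abs]
    gcongr
    exact (norm_inner_le_norm x w).trans_eq (mul_comm _ _)
  · refine hexp.norm.congr (.of_forall fun x => ?_)
    beta_reduce
    rw [((hseries_real _).mul_right _).tsum_eq, norm_mul, Real.norm_eq_abs, Real.abs_exp,
      Real.norm_eq_abs]

lemma integral_cexp_inner_mul_eq_zero {μ : Measure V} {g : V → ℝ}
    (hg : AEStronglyMeasurable g μ) (w : V)
    (hexp : Integrable (fun x => Real.exp (‖w‖ * ‖x‖) * g x) μ)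
    (hmom : ∀ n : ℕ, ∫ x, inner ℝ x w ^ n * g x ∂μ = 0) :
    ∫ x, Complex.exp (inner ℝ x w * Complex.I) * g x ∂μ = 0 := by
  have hzero (n : ℕ) :
      ∫ x, (inner ℝ x w * Complex.I) ^ n / n.factorial * (g x : ℂ) ∂μ = 0 := by
    calc ∫ x, (inner ℝ x w * Complex.I) ^ n / n.factorial * (g x : ℂ) ∂μ
        = ∫ x, Complex.I ^ n / n.factorial * ((inner ℝ x w ^ n * g x : ℝ) : ℂ) ∂μ := by
          refine integral_congr_ae <| .of_forall fun x => ?_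
          push_cast
          ring
      _ = 0 := by
          rw [integral_const_mul, integral_complex_ofReal, hmom, Complex.ofReal_zero, mul_zero]
  have hsum := hasSum_integral_cexp_inner_mul hg w hexp
  simp only [hzero] at hsum
  exact hsum.unique hasSum_zero

lemma ae_eq_zero_of_moments_eq_zero [FiniteDimensional ℝ V] {g : V → ℝ}
    (hg : AEStronglyMeasurable g) (hexp : ∀ c : ℝ, Integrable fun x => Real.exp (c * ‖x‖) * g x)
    (hmom : ∀ (w : V) (n : ℕ), ∫ x, inner ℝ x w ^ n * g x = 0) : g =ᵐ[volume] 0 := by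
  have hint : Integrable fun x => (g x : ℂ) := by simpa using (hexp 0).ofReal (𝕜 := ℂ)
  have hfourier : 𝓕 (fun x => (g x : ℂ)) = 0 := by
    ext ξ
    rw [Real.fourier_eq']
    have hzero := integral_cexp_inner_mul_eq_zero hg ((-2 * Real.pi) • ξ) (hexp _) (hmom _)
    simpa [inner_smul_right] using hzero
  filter_upwards [ae_eq_zero_of_fourier_eq_zero hint hfourier] with x hx
  exact Complex.ofReal_eq_zero.1 hx

end Fourier

namespace IsHermiteFamily

variable {d : ℕ} {h : (Fin d → ℕ) → 𝓢(EuclideanSpace ℝ (Fin d), ℝ)}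

lemma coordMul_mem_span (hh : IsHermiteFamily h) (i : Fin d)
    {f : 𝓢(EuclideanSpace ℝ (Fin d), ℝ)} (hf : f ∈ Submodule.span ℝ (Set.range h)) :
    coordMul i f ∈ Submodule.span ℝ (Set.range h) := by
  have hle : Submodule.span ℝ (Set.range h) ≤
      (Submodule.span ℝ (Set.range h)).comap (coordMul i).toLinearMap := by
    refine Submodule.span_le.2 (Set.range_subset_iff.2 fun γ => ?_)
    have hmem (δ : Fin d → ℕ) : h δ ∈ Submodule.span ℝ (Set.range h) :=
      Submodule.subset_span ⟨δ, rfl⟩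
    simpa [hh.coordMul_eq] using
      add_mem (Submodule.smul_mem _ _ (hmem _)) (Submodule.smul_mem _ _ (hmem _))
  exact hle hf

lemma exists_mem_span_inner_pow_mul (hh : IsHermiteFamily h) (w : EuclideanSpace ℝ (Fin d))
    (n : ℕ) : ∃ f ∈ Submodule.span ℝ (Set.range h), ∀ x, f x = inner ℝ x w ^ n * h 0 x := by
  induction n with
  | zero => exact ⟨h 0, Submodule.subset_span ⟨0, rfl⟩, by simp⟩
  | succ n ih =>
    obtain ⟨f, hf, hfx⟩ := ih
    refine ⟨∑ i, w i • coordMul i f,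
      Submodule.sum_mem _ fun i _ => Submodule.smul_mem _ _ (hh.coordMul_mem_span i hf),
      fun x => ?_⟩
    simp [coordMul_apply, hfx, pow_succ', PiLp.inner_apply,
      Finset.sum_mul, mul_assoc]

lemma memLp_exp_mul (hh : IsHermiteFamily h) (c : ℝ) :
    MemLp (fun x => Real.exp (c * ‖x‖) * h 0 x) 2 := by
  set K : ℝ := (√√(2 * Real.pi))⁻¹ ^ d
  have hzero (x : EuclideanSpace ℝ (Fin d)) : h 0 x = K * Real.exp (-(1 / 4) * ‖x‖ ^ 2) := by
    rw [hh, hermiteFunMulti_zero]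
  have hcont := (h 0).continuous
  rw [memLp_two_iff_integrable_sq (Continuous.aestronglyMeasurable (by fun_prop))]
  refine ((h 0).integrable.const_mul (K * Real.exp (4 * c ^ 2))).mono'
    (Continuous.aestronglyMeasurable (by fun_prop)) (.of_forall fun x => ?_)
  rw [Real.norm_of_nonneg (by positivity), hzero]
  calc (Real.exp (c * ‖x‖) * (K * Real.exp (-(1 / 4) * ‖x‖ ^ 2))) ^ 2
      = K ^ 2 * Real.exp (2 * c * ‖x‖ - ‖x‖ ^ 2 / 2) := by
        rw [mul_left_comm, ← Real.exp_add, mul_pow, ← Real.exp_nat_mul]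
        push_cast
        ring_nf
    _ ≤ K ^ 2 * Real.exp (4 * c ^ 2 + -(1 / 4) * ‖x‖ ^ 2) := by
        gcongr
        nlinarith [sq_nonneg (‖x‖ - 4 * c)]
    _ = K * Real.exp (4 * c ^ 2) * (K * Real.exp (-(1 / 4) * ‖x‖ ^ 2)) := by
        rw [Real.exp_add]
        ring

lemma eq_zero_of_inner_eq_zero (hh : IsHermiteFamily h)
    {u : Lp ℝ 2 (volume : Measure (EuclideanSpace ℝ (Fin d)))}
    (hu : ∀ γ, inner ℝ ((h γ).toLp 2) u = 0) : u = 0 := by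
  have hspan {f : 𝓢(EuclideanSpace ℝ (Fin d), ℝ)} (hf : f ∈ Submodule.span ℝ (Set.range h)) :
      ∫ x, f x * u x = 0 := by
    have hle : Submodule.span ℝ (Set.range h) ≤ LinearMap.ker
        ((innerSL ℝ u).comp (SchwartzMap.toLpCLM ℝ ℝ 2 volume)).toLinearMap :=
      Submodule.span_le.2 <| Set.range_subset_iff.2 fun γ => by
        simpa [real_inner_comm] using hu γ
    have hinner : inner ℝ u (f.toLp 2) = 0 := hle hf
    rw [← hinner, L2.inner_def]
    refine integral_congr_ae ?_
    filter_upwards [f.coeFn_toLp 2] with x hx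
    simp [hx]
  have hprod : (fun x => h 0 x * u x) =ᵐ[volume] 0 := by
    refine ae_eq_zero_of_moments_eq_zero
      ((h 0).continuous.aestronglyMeasurable.mul (Lp.aestronglyMeasurable u))
      (fun c => ?_) fun w n => ?_
    · exact ((hh.memLp_exp_mul c).integrable_mul (Lp.memLp u)).congr
        (.of_forall fun x => mul_assoc _ _ _)
    · obtain ⟨f, hf, hfx⟩ := hh.exists_mem_span_inner_pow_mul w n
      simpa only [hfx, mul_assoc] using hspan hf
  rw [Lp.eq_zero_iff_ae_eq_zero]
  filter_upwards [hprod] with x hx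
  refine (mul_eq_zero.1 hx).resolve_left ?_
  rw [hh, hermiteFunMulti_zero]
  positivity

lemma hasSum_hermCoeff_sq (hh : IsHermiteFamily h) (f : 𝓢(EuclideanSpace ℝ (Fin d), ℝ)) :
    HasSum (fun γ => hermCoeff d f γ ^ 2) (∫ x, f x * f x) := by
  let b : HilbertBasis (Fin d → ℕ) ℝ (Lp ℝ 2 (volume : Measure (EuclideanSpace ℝ (Fin d)))) :=
    .mkOfOrthogonalEqBot hh.orthonormal_toLp <| (Submodule.eq_bot_iff _).2 fun u hu =>
      hh.eq_zero_of_inner_eq_zero fun γ =>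
        (Submodule.mem_orthogonal _ _).1 hu _ (Submodule.subset_span ⟨γ, rfl⟩)
  have hb := b.hasSum_inner_mul_inner (f.toLp 2) (f.toLp 2)
  simp only [b, HilbertBasis.coe_mkOfOrthogonalEqBot] at hb
  rw [inner_toLp_toLp] at hb
  refine hb.congr_fun fun γ => ?_
  rw [hh.hermCoeff_eq_inner, pow_two]
  congr 1
  exact real_inner_comm _ _

end IsHermiteFamily

end Completeness

section Energy

open scoped ENNReal NNReal Polynomial

lemma enorm_sub_sq_le {E : Type*} [SeminormedAddCommGroup E] (u v : E) :
    ‖u - v‖ₑ ^ 2 ≤ 2 * (‖u‖ₑ ^ 2 + ‖v‖ₑ ^ 2) := by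
  have hnnnorm : ‖u - v‖₊ ^ 2 ≤ 2 * (‖u‖₊ ^ 2 + ‖v‖₊ ^ 2) := by
    grw [nnnorm_sub_le, add_sq_le]
  simp only [enorm_eq_nnnorm]
  exact_mod_cast hnnnorm

variable {d : ℕ}

/-- The square of the Hermite norm of order `s / 2`, as an extended nonnegative real. Allowing odd
`s` makes an induction over single creation operators possible. -/
noncomputable def energy (s : ℕ) (f : EuclideanSpace ℝ (Fin d) → ℝ) : ℝ≥0∞ :=
  ∑' β : Fin d → ℕ, (weight β : ℝ≥0∞) ^ s * ‖hermCoeff d f β‖ₑ ^ 2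

lemma hermNorm_eq_sqrt_toReal_energy (n : ℕ) (f : EuclideanSpace ℝ (Fin d) → ℝ) :
    hermNorm d n f = √(energy (2 * n) f).toReal := by
  rw [hermNorm, energy, ENNReal.tsum_toReal_eq fun β => by finiteness]
  simp only [ENNReal.toReal_mul, ENNReal.toReal_pow, ENNReal.toReal_natCast, toReal_enorm,
    Real.norm_eq_abs, sq_abs, weight]

lemma energy_le_energy_succ (hd : 0 < d) (s : ℕ) (f : EuclideanSpace ℝ (Fin d) → ℝ) :
    energy s f ≤ energy (s + 1) f := by
  refine ENNReal.tsum_le_tsum fun β => ?_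
  gcongr
  · exact_mod_cast weight_pos hd β
  · exact s.le_succ

/-- The translate `y ↦ f (y + x)` of a Schwartz function. -/
noncomputable def translate (x : EuclideanSpace ℝ (Fin d)) :
    𝓢(EuclideanSpace ℝ (Fin d), ℝ) →L[ℝ] 𝓢(EuclideanSpace ℝ (Fin d), ℝ) :=
  SchwartzMap.compSubConstCLM ℝ (-x)

lemma translate_apply (x : EuclideanSpace ℝ (Fin d)) (f : 𝓢(EuclideanSpace ℝ (Fin d), ℝ))
    (y : EuclideanSpace ℝ (Fin d)) : translate x f y = f (y + x) := by
  simp [translate]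

lemma creation_translate (i : Fin d) (x : EuclideanSpace ℝ (Fin d))
    (f : 𝓢(EuclideanSpace ℝ (Fin d), ℝ)) :
    creation i (translate x f) = translate x (creation i f - (x i / 2) • f) := by
  ext y
  have hderiv : (∂_{EuclideanSpace.single i (1 : ℝ)} (translate x f)) y =
      (∂_{EuclideanSpace.single i (1 : ℝ)} f) (y + x) := by
    simp only [SchwartzMap.lineDerivOp_apply, lineDeriv, translate_apply, add_right_comm]
  simp only [creation_apply, translate_apply, hderiv, coordMul_apply, sub_apply,
    smul_apply, PiLp.add_apply, smul_eq_mul]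
  ring

namespace IsHermiteFamily

variable {h : (Fin d → ℕ) → 𝓢(EuclideanSpace ℝ (Fin d), ℝ)}

lemma hermCoeff_sub_smul (hh : IsHermiteFamily h) (f g : 𝓢(EuclideanSpace ℝ (Fin d), ℝ)) (a : ℝ)
    (β : Fin d → ℕ) : hermCoeff d (f - a • g : 𝓢(EuclideanSpace ℝ (Fin d), ℝ)) β =
      hermCoeff d f β - a * hermCoeff d g β := by
  simp only [hh.hermCoeff_eq_integral, sub_apply, smul_apply, smul_eq_mul,
    sub_mul, mul_assoc]
  rw [integral_sub (integrable_mul f (h β)) ((integrable_mul g (h β)).const_mul a),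
    integral_const_mul]

lemma enorm_hermCoeff_creation_add_single_sq (hh : IsHermiteFamily h)
    (f : 𝓢(EuclideanSpace ℝ (Fin d), ℝ)) (β : Fin d → ℕ) (i : Fin d) :
    ‖hermCoeff d (creation i f) (β + Pi.single i 1)‖ₑ ^ 2 =
      (β i + 1) * ‖hermCoeff d f β‖ₑ ^ 2 := by
  have hsqrt : ‖√(β i + 1 : ℝ)‖ₑ ^ 2 = β i + 1 := by
    rw [← enorm_pow, Real.sq_sqrt (by positivity), Real.enorm_of_nonneg (by positivity)]
    exact_mod_cast ENNReal.ofReal_natCast (β i + 1)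
  rw [hh.hermCoeff_creation, add_tsub_cancel_right, enorm_mul, mul_pow]
  simp [hsqrt]

lemma energy_zero (hh : IsHermiteFamily h) (f : 𝓢(EuclideanSpace ℝ (Fin d), ℝ)) :
    energy 0 f = ENNReal.ofReal (∫ x, f x * f x) := by
  have hparseval := hh.hasSum_hermCoeff_sq f
  rw [← hparseval.tsum_eq,
    ENNReal.ofReal_tsum_of_nonneg (fun _ => sq_nonneg _) hparseval.summable]
  simp [energy, ← enorm_pow, Real.enorm_of_nonneg (sq_nonneg _)]

lemma energy_sub_smul_le (hh : IsHermiteFamily h) (s : ℕ) (f g : 𝓢(EuclideanSpace ℝ (Fin d), ℝ))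
    (a : ℝ) : energy s (f - a • g : 𝓢(EuclideanSpace ℝ (Fin d), ℝ)) ≤
      2 * (energy s f + ‖a‖ₑ ^ 2 * energy s g) := by
  rw [energy, energy, energy, ← ENNReal.tsum_mul_left, ← ENNReal.tsum_add, ← ENNReal.tsum_mul_left]
  refine ENNReal.tsum_le_tsum fun β => ?_
  rw [hh.hermCoeff_sub_smul]
  calc (weight β : ℝ≥0∞) ^ s * ‖hermCoeff d f β - a * hermCoeff d g β‖ₑ ^ 2
      ≤ weight β ^ s * (2 * (‖hermCoeff d f β‖ₑ ^ 2 + ‖a * hermCoeff d g β‖ₑ ^ 2)) := by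
        gcongr
        exact enorm_sub_sq_le _ _
    _ = 2 * (weight β ^ s * ‖hermCoeff d f β‖ₑ ^ 2 +
          ‖a‖ₑ ^ 2 * (weight β ^ s * ‖hermCoeff d g β‖ₑ ^ 2)) := by
        rw [enorm_mul]
        ring

lemma energy_succ_le (hh : IsHermiteFamily h) (s : ℕ) (f : 𝓢(EuclideanSpace ℝ (Fin d), ℝ)) :
    energy (s + 1) f ≤ 2 * ∑ i, energy s (creation i f) := by
  have hweight (β : Fin d → ℕ) : (weight β : ℝ≥0∞) ≤ 2 * ∑ i, ((β i : ℝ≥0∞) + 1) := by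
    have hle : weight β ≤ 2 * ∑ i, (β i + 1) := by
      simp only [weight, Finset.sum_add_distrib, Fin.sum_const, smul_eq_mul]
      lia
    exact_mod_cast hle
  calc energy (s + 1) f
      ≤ ∑' β : Fin d → ℕ, 2 * ∑ i, (weight β : ℝ≥0∞) ^ s *
          ‖hermCoeff d (creation i f) (β + Pi.single i 1)‖ₑ ^ 2 := by
        refine ENNReal.tsum_le_tsum fun β => ?_
        simp only [hh.enorm_hermCoeff_creation_add_single_sq, ← Finset.mul_sum, ← Finset.sum_mul]
        calc (weight β : ℝ≥0∞) ^ (s + 1) * ‖hermCoeff d f β‖ₑ ^ 2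
            = weight β ^ s * (weight β * ‖hermCoeff d f β‖ₑ ^ 2) := by ring
          _ ≤ weight β ^ s * (2 * (∑ i, ((β i : ℝ≥0∞) + 1)) * ‖hermCoeff d f β‖ₑ ^ 2) := by
            grw [← hweight β]
          _ = 2 * (weight β ^ s * ((∑ i, ((β i : ℝ≥0∞) + 1)) * ‖hermCoeff d f β‖ₑ ^ 2)) := by ring
    _ = 2 * ∑ i, ∑' β : Fin d → ℕ, (weight β : ℝ≥0∞) ^ s *
          ‖hermCoeff d (creation i f) (β + Pi.single i 1)‖ₑ ^ 2 := by
        rw [ENNReal.tsum_mul_left, Summable.tsum_finsetSum fun i _ => ENNReal.summable]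
    _ ≤ 2 * ∑ i, energy s (creation i f) := by
        gcongr with i
        refine le_trans (ENNReal.tsum_le_tsum fun β => ?_) <|
          ENNReal.tsum_comp_le_tsum_of_injective (add_left_injective (Pi.single i 1 : Fin d → ℕ)) _
        gcongr
        exact (Nat.le_add_right _ 2).trans_eq (weight_add_single β i).symm

lemma energy_creation_le (hh : IsHermiteFamily h) (s : ℕ) (f : 𝓢(EuclideanSpace ℝ (Fin d), ℝ))
    (i : Fin d) : energy s (creation i f) ≤ 3 ^ s * energy (s + 1) f := by
  have hsupport :
      (Function.support fun γ => (weight γ : ℝ≥0∞) ^ s * ‖hermCoeff d (creation i f) γ‖ₑ ^ 2) ⊆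
        Set.range fun β : Fin d → ℕ => β + Pi.single i 1 := by
    intro γ hγ
    refine ⟨γ - Pi.single i 1, sub_single_add_single fun hi => hγ ?_⟩
    simp [hh.hermCoeff_creation, hi]
  have hweight (β : Fin d → ℕ) : (weight (β + Pi.single i 1) : ℝ≥0∞) ≤ 3 * weight β := by
    have := lt_weight β i
    rw [weight_add_single]
    norm_cast
    lia
  have hindex (β : Fin d → ℕ) : (β i : ℝ≥0∞) + 1 ≤ weight β := mod_cast lt_weight β i
  rw [energy, ← (add_left_injective (Pi.single i 1)).tsum_eq hsupport, energy,
    ← ENNReal.tsum_mul_left]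
  refine ENNReal.tsum_le_tsum fun β => ?_
  rw [hh.enorm_hermCoeff_creation_add_single_sq]
  grw [hweight β, hindex β]
  exact le_of_eq (by ring)

lemma energy_ne_top (hh : IsHermiteFamily h) (s : ℕ) (f : 𝓢(EuclideanSpace ℝ (Fin d), ℝ)) :
    energy s f ≠ ∞ := by
  induction s generalizing f with
  | zero => exact hh.energy_zero f ▸ ENNReal.ofReal_ne_top
  | succ s ih =>
    exact ne_top_of_le_ne_top
      (ENNReal.mul_ne_top ENNReal.ofNat_ne_top (ENNReal.sum_ne_top.2 fun i _ => ih _))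
      (hh.energy_succ_le s f)

lemma exists_energy_translate_le (hh : IsHermiteFamily h) (s : ℕ) :
    ∃ P : ℝ≥0[X], ∀ x (f : 𝓢(EuclideanSpace ℝ (Fin d), ℝ)),
      energy s (translate x f) ≤ P.eval ‖x‖₊ * energy s f := by
  induction s with
  | zero =>
    refine ⟨1, fun x f => ?_⟩
    simp only [hh.energy_zero, translate_apply, integral_add_right_eq_self fun y => f y * f y]
    simp
  | succ s ih =>
    obtain ⟨P, hP⟩ := ih
    refine ⟨P * (2 * d * (2 * (3 ^ s + .X ^ 2))), fun x f => ?_⟩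
    have hstep (i : Fin d) : energy s (creation i (translate x f)) ≤
        P.eval ‖x‖₊ * (2 * (3 ^ s + ‖x‖ₑ ^ 2)) * energy (s + 1) f := by
      have hxi : ‖x i / 2‖ₑ ≤ ‖x‖ₑ := by
        rw [enorm_le_iff_norm_le, norm_div, Real.norm_two]
        linarith [PiLp.norm_apply_le x i, norm_nonneg x]
      rw [creation_translate]
      grw [hP, hh.energy_sub_smul_le, hh.energy_creation_le, hxi,
        energy_le_energy_succ i.pos s f]
      exact le_of_eq (by ring)
    grw [hh.energy_succ_le, Finset.sum_le_sum fun i _ => hstep i]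
    refine le_of_eq ?_
    simp only [enorm_eq_nnnorm, Fin.sum_const, nsmul_eq_mul, Polynomial.eval_mul,
      Polynomial.eval_ofNat, Polynomial.eval_natCast, Polynomial.eval_add, Polynomial.eval_pow,
      Polynomial.eval_X, ENNReal.coe_mul, ENNReal.coe_ofNat, ENNReal.coe_natCast, ENNReal.coe_add,
      ENNReal.coe_pow]
    ring

lemma exists_hermNorm_translate_le (hh : IsHermiteFamily h) (n : ℕ) :
    ∃ P : ℝ[X], (∀ k, 0 ≤ P.coeff k) ∧ ∀ x (f : 𝓢(EuclideanSpace ℝ (Fin d), ℝ)),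
      hermNorm d n (translate x f) ≤ P.eval ‖x‖ * hermNorm d n f := by
  obtain ⟨P, hP⟩ := hh.exists_energy_translate_le (2 * n)
  refine ⟨(1 + P).map NNReal.toRealHom, fun k => ?_, fun x f => ?_⟩
  · rw [Polynomial.coeff_map]
    exact NNReal.coe_nonneg _
  have heval : ((1 + P).map NNReal.toRealHom).eval ‖x‖ = 1 + (P.eval ‖x‖₊ : ℝ≥0) := by
    rw [← coe_nnnorm, ← NNReal.coe_toRealHom, Polynomial.eval_map_apply]
    simp
  have hsqrt (t : ℝ≥0) : √(t : ℝ) ≤ 1 + t :=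
    Real.sqrt_le_iff.2 ⟨by positivity, by nlinarith [t.coe_nonneg]⟩
  rw [heval, hermNorm_eq_sqrt_toReal_energy, hermNorm_eq_sqrt_toReal_energy]
  calc √(energy (2 * n) (translate x f)).toReal
      ≤ √((P.eval ‖x‖₊ : ℝ≥0) * energy (2 * n) f).toReal := by
        gcongr
        · have := hh.energy_ne_top (2 * n) f
          finiteness
        · exact hP x f
    _ = √(P.eval ‖x‖₊ : ℝ≥0) * √(energy (2 * n) f).toReal := by
        rw [ENNReal.toReal_mul, ENNReal.coe_toReal, Real.sqrt_mul (NNReal.coe_nonneg _)]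
    _ ≤ (1 + (P.eval ‖x‖₊ : ℝ≥0)) * √(energy (2 * n) f).toReal := by
        gcongr
        exact hsqrt _

lemma abs_sum_mul_hermCoeff_le (hh : IsHermiteFamily h) {n : ℕ} {a : (Fin d → ℕ) → ℝ}
    (hn : ∀ γ : Fin d → ℕ, (weight γ : ℝ) ^ n ≠ 0)
    (ha : Summable fun γ => ((weight γ : ℝ) ^ (2 * n))⁻¹ * a γ ^ 2)
    (F : Finset (Fin d → ℕ)) (f : 𝓢(EuclideanSpace ℝ (Fin d), ℝ)) :
    |∑ γ ∈ F, a γ * hermCoeff d f γ| ≤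
      √(∑' γ, ((weight γ : ℝ) ^ (2 * n))⁻¹ * a γ ^ 2) * hermNorm d n f := by
  have hf : Summable fun γ => (weight γ : ℝ) ^ (2 * n) * hermCoeff d f γ ^ 2 := by
    simpa using ENNReal.summable_toReal (hh.energy_ne_top (2 * n) f)
  rw [hermNorm, ← Real.sqrt_mul (tsum_nonneg fun γ => by positivity)]
  refine Real.abs_le_sqrt ?_
  calc (∑ γ ∈ F, a γ * hermCoeff d f γ) ^ 2
      = (∑ γ ∈ F, ((weight γ : ℝ) ^ n)⁻¹ * a γ * ((weight γ : ℝ) ^ n * hermCoeff d f γ)) ^ 2 := by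
        congr 1
        refine Finset.sum_congr rfl fun γ _ => ?_
        have := hn γ
        field_simp
    _ ≤ (∑ γ ∈ F, ((weight γ : ℝ) ^ (2 * n))⁻¹ * a γ ^ 2) *
          ∑ γ ∈ F, (weight γ : ℝ) ^ (2 * n) * hermCoeff d f γ ^ 2 := by
        refine (Finset.sum_mul_sq_le_sq_mul_sq ..).trans_eq ?_
        simp only [mul_pow, inv_pow, ← pow_mul, mul_comm n 2]
    _ ≤ (∑' γ, ((weight γ : ℝ) ^ (2 * n))⁻¹ * a γ ^ 2) *
          ∑' γ : Fin d → ℕ, (weight γ : ℝ) ^ (2 * n) * hermCoeff d f γ ^ 2 := by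
        gcongr
        · exact ha.sum_le_tsum _ fun γ _ => by positivity
        · exact hf.sum_le_tsum _ fun γ _ => by positivity

end IsHermiteFamily

end Energy

end HermiteExpansion

/-- For a tempered distribution `T` there are `q` with `‖T‖_{-q} < ∞` and a
polynomial `P` with nonnegative coefficients such that every finite partial sum
of the translated Hermite expansion satisfies
`|Σ_{γ∈F} T(h_γ) ∫ h_γ(y) φ(y+x) dy| ≤ P(|x|) ‖T‖_{-q} |φ|_q`. -/
theorem hermite_partial_sums_uniform_bound (d : ℕ)
    (h : (Fin d → ℕ) → SchwartzMap (EuclideanSpace ℝ (Fin d)) ℝ)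
    (hh : ∀ β x, h β x = hermiteFunMulti d β x)
    (T : SchwartzMap (EuclideanSpace ℝ (Fin d)) ℝ →L[ℝ] ℝ) :
    ∃ q : ℕ,
      Summable (fun γ : Fin d → ℕ =>
        ((((2 * ∑ i, γ i) + d : ℕ) : ℝ) ^ (2 * q))⁻¹ * (T (h γ)) ^ 2) ∧
      ∃ P : Polynomial ℝ, (∀ k, 0 ≤ P.coeff k) ∧
        ∀ (F : Finset (Fin d → ℕ)) (x : EuclideanSpace ℝ (Fin d))
          (φ : SchwartzMap (EuclideanSpace ℝ (Fin d)) ℝ),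
          |∑ γ ∈ F, T (h γ) * ∫ y, hermiteFunMulti d γ y * φ (y + x)| ≤
            P.eval ‖x‖ *
              Real.sqrt (∑' γ : Fin d → ℕ,
                ((((2 * ∑ i, γ i) + d : ℕ) : ℝ) ^ (2 * q))⁻¹ * (T (h γ)) ^ 2) *
              hermNorm d q (fun z => φ z) := by
  have hherm : HermiteExpansion.IsHermiteFamily h := hh
  obtain ⟨q, hq, hsum⟩ :=
    (hherm.hasPolynomialGrowth_apply T).exists_summable_inv_weight_pow_mul_sq
  obtain ⟨P, hP_nonneg, hP⟩ := hherm.exists_hermNorm_translate_le q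
  refine ⟨q, hsum, P, hP_nonneg, fun F x φ => ?_⟩
  have hcoeff (γ : Fin d → ℕ) : ∫ y, hermiteFunMulti d γ y * φ (y + x) =
      hermCoeff d (HermiteExpansion.translate x φ) γ := by
    simp only [hermCoeff, HermiteExpansion.translate_apply, mul_comm]
  set N := √(∑' γ : Fin d → ℕ, ((((2 * ∑ i, γ i) + d : ℕ) : ℝ) ^ (2 * q))⁻¹ * (T (h γ)) ^ 2)
  simp only [hcoeff]
  calc |∑ γ ∈ F, T (h γ) * hermCoeff d (HermiteExpansion.translate x φ) γ|
      ≤ N * hermNorm d q (HermiteExpansion.translate x φ) :=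
        hherm.abs_sum_mul_hermCoeff_le hq hsum F _
    _ ≤ N * (P.eval ‖x‖ * hermNorm d q φ) := by gcongr; exact hP x φ
    _ = P.eval ‖x‖ * N * hermNorm d q φ := by ring
end
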